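/- Let M ∈ Mat_{m,n}(ℤ≥0) and write RSK(M) = (P, Q). Then for all 1 ≤ i ≤ m−1 and 1 ≤ j ≤ n−1: RSK(f_i^row(M)) = (f_i(P), Q), RSK(e_i^row(M)) = (e_i(P), Q), RSK(f_j^col(M)) = (P, f_j(Q)), and RSK(e_j^col(M)) = (P, e_j(Q)); here the matrix operator returns ∅ exactly when the corresponding tableau crystal operator returns ∅. -/

import Mathlib

namespace GCS

/-- Given a labelled word whose letter `cl` plays the role of a closing bracket `)` and
whose letter `op` plays the role of an opening bracket `(`, with `o` the number of currently
unmatched opening brackets seen so far, return the label of the rightmost unmatched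
closing bracket (or `none` if every closing bracket is matched). -/
def lastUnmatched {β : Type} (cl op : ℕ) : List (ℕ × β) → ℕ → Option β
  | [], _ => none
  | (a, lbl) :: rest, o =>
    if a = cl then
      if o = 0 then
        match lastUnmatched cl op rest 0 with
        | some x => some x
        | none => some lbl
      else lastUnmatched cl op rest (o - 1)
    else if a = op then lastUnmatched cl op rest (o + 1)
    else lastUnmatched cl op rest o

variable {m n : ℕ}

/-- The labelled row word of a matrix of nonnegative integers: read the columns left to
right, each column top to bottom, recording `M r c` copies of the (1-based) row index
`r + 1`, each labelled by its column `c`. -/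
def rowWordLbl (M : Matrix (Fin m) (Fin n) ℕ) : List (ℕ × Fin n) :=
  (List.finRange n).flatMap fun c =>
    (List.finRange m).flatMap fun r => List.replicate (M r c) (r.1 + 1, c)

/-- The row word `row(M)` (letters are 1-based row indices). -/
def rowWord (M : Matrix (Fin m) (Fin n) ℕ) : List ℕ := (rowWordLbl M).map Prod.fst

/-- The column word `col(M) = row(Mᵀ)`. -/
def colWord (M : Matrix (Fin m) (Fin n) ℕ) : List ℕ := rowWord M.transpose

/-- The lowering bicrystal operator `f_i^row` (here `i` is the 1-based row index,
`1 ≤ i ≤ m - 1`): locate the rightmost unmatched `)` in `bracket_i(row(M))`, coming from an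
entry in row `i` and some column `c`; decrease that entry by one and increase the entry of
row `i+1`, column `c` by one.  Returns `none` if every `)` is matched. -/
def frow (i : ℕ) (M : Matrix (Fin m) (Fin n) ℕ) : Option (Matrix (Fin m) (Fin n) ℕ) :=
  (lastUnmatched i (i + 1) (rowWordLbl M) 0).map fun c =>
    Matrix.of fun a b =>
      if a.1 + 1 = i ∧ b = c then M a b - 1
      else if a.1 + 1 = i + 1 ∧ b = c then M a b + 1
      else M a b

/-- The raising bicrystal operator `e_i^row`: locate the leftmost unmatched `(` in
`bracket_i(row(M))`, coming from an entry in row `i+1` and some column `c`; decrease that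
entry by one and increase the entry of row `i`, column `c` by one. -/
def erow (i : ℕ) (M : Matrix (Fin m) (Fin n) ℕ) : Option (Matrix (Fin m) (Fin n) ℕ) :=
  (lastUnmatched (i + 1) i (rowWordLbl M).reverse 0).map fun c =>
    Matrix.of fun a b =>
      if a.1 + 1 = i + 1 ∧ b = c then M a b - 1
      else if a.1 + 1 = i ∧ b = c then M a b + 1
      else M a b

/-- `f_j^col(M) = (f_j^row(Mᵀ))ᵀ`. -/
def fcol (j : ℕ) (M : Matrix (Fin m) (Fin n) ℕ) : Option (Matrix (Fin m) (Fin n) ℕ) :=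
  (frow j M.transpose).map Matrix.transpose

/-- `e_j^col(M) = (e_j^row(Mᵀ))ᵀ`. -/
def ecol (j : ℕ) (M : Matrix (Fin m) (Fin n) ℕ) : Option (Matrix (Fin m) (Fin n) ℕ) :=
  (erow j M.transpose).map Matrix.transpose

/-- `I` is (the set of cut indices of) a Levi datum for size `m`:
`I = {0 = i_0 < i_1 < ⋯ < i_r = m}`. -/
def IsLeviDatum (m : ℕ) (I : Finset ℕ) : Prop := 0 ∈ I ∧ m ∈ I ∧ ∀ x ∈ I, x ≤ m

/-- The admissible bicrystal operators for the Levi datum `(𝐈, 𝐉)` are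
`f_i^row, e_i^row` for `i ∉ 𝐈` and `f_j^col, e_j^col` for `j ∉ 𝐉`. -/
def AdmissibleOp (m n : ℕ) (I J : Finset ℕ)
    (φ : Matrix (Fin m) (Fin n) ℕ → Option (Matrix (Fin m) (Fin n) ℕ)) : Prop :=
  (∃ i, 0 < i ∧ i < m ∧ i ∉ I ∧ (φ = frow i ∨ φ = erow i)) ∨
  (∃ j, 0 < j ∧ j < n ∧ j ∉ J ∧ (φ = fcol j ∨ φ = ecol j))

/-- A set `S` of exponent matrices is `(𝐈,𝐉)`-bicrystal closed if `φ(M) ∈ S ∪ {∅}` for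
every admissible operator `φ` and every `M ∈ S`. -/
def BicrystalClosed (m n : ℕ) (I J : Finset ℕ) (S : Set (Matrix (Fin m) (Fin n) ℕ)) : Prop :=
  ∀ φ, AdmissibleOp m n I J φ → ∀ M ∈ S, ∀ N, φ M = some N → N ∈ S

/-- A term order on monomials in variables indexed by `σ`: a linear order on exponent
vectors compatible with addition and having `0` (i.e. the monomial `1`) as minimum. -/
structure TermOrder (σ : Type) where
  le : (σ →₀ ℕ) → (σ →₀ ℕ) → Prop
  le_refl : ∀ u, le u u
  le_trans : ∀ u v w, le u v → le v w → le u w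
  le_antisymm : ∀ u v, le u v → le v u → u = v
  le_total : ∀ u v, le u v ∨ le v u
  add_le_add : ∀ u v w, le u v → le (u + w) (v + w)
  zero_le : ∀ u, le 0 u

/-- `u` is the exponent vector of the initial term `init_≺ f`: it lies in the support of
`f` and is `≺`-largest among the monomials of `f`.  (If `f = 0`, no `u` satisfies this.) -/
def IsInitExp {σ : Type} (ord : TermOrder σ) (f : MvPolynomial σ ℂ) (u : σ →₀ ℕ) : Prop :=
  u ∈ f.support ∧ ∀ v ∈ f.support, ord.le v u

/-- The initial ideal `init_≺ I = ⟨init_≺ f : f ∈ I, f ≠ 0⟩`. -/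
noncomputable def initialIdeal {σ : Type} (ord : TermOrder σ) (I : Ideal (MvPolynomial σ ℂ)) :
    Ideal (MvPolynomial σ ℂ) :=
  Ideal.span {p | ∃ f ∈ I, ∃ u, IsInitExp ord f u ∧ p = MvPolynomial.monomial u (1 : ℂ)}

/-- The exponent vector of the monomial `z^M` attached to the matrix `M`. -/
noncomputable def expOf (M : Matrix (Fin m) (Fin n) ℕ) : (Fin m × Fin n) →₀ ℕ :=
  Finsupp.equivFunOnFinite.symm fun p => M p.1 p.2

/-- `Mat_≺ I`, the set of exponent matrices of monomials lying in `init_≺ I`. -/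
def matLT (ord : TermOrder (Fin m × Fin n)) (I : Ideal (MvPolynomial (Fin m × Fin n) ℂ)) :
    Set (Matrix (Fin m) (Fin n) ℕ) :=
  {M | MvPolynomial.monomial (expOf M) (1 : ℂ) ∈ initialIdeal ord I}

/-- Indices `a`, `b` (0-based) lie in the same diagonal block determined by the cuts `I`. -/
def SameBlock (I : Finset ℕ) (a b : ℕ) : Prop := ∀ i ∈ I, (a < i ↔ b < i)

/-- `g` belongs to the block-diagonal Levi subgroup `L_𝐈 ≤ GL_m`: `g` is invertible and
vanishes outside the diagonal blocks cut out by `I`. -/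
def InLevi {m : ℕ} (I : Finset ℕ) (g : Matrix (Fin m) (Fin m) ℂ) : Prop :=
  IsUnit g ∧ ∀ a b : Fin m, ¬ SameBlock I a.1 b.1 → g a b = 0

/-- The action of the pair `(g, h)` on `ℂ[Mat_{m,n}]`: `((g,h)·f)(Z) = f(g Z hᵀ)`,
i.e. the substitution `z_{ab} ↦ ∑_{c,d} g_{ac} h_{bd} z_{cd}`. -/
noncomputable def leviAct (g : Matrix (Fin m) (Fin m) ℂ) (h : Matrix (Fin n) (Fin n) ℂ) :
    MvPolynomial (Fin m × Fin n) ℂ →ₐ[ℂ] MvPolynomial (Fin m × Fin n) ℂ :=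
  MvPolynomial.aeval fun p => ∑ c : Fin m, ∑ d : Fin n,
    MvPolynomial.C (g p.1 c * h p.2 d) * MvPolynomial.X (c, d)

/-- The ideal `Idl` is stable under the action of `L_𝐈 × L_𝐉`. -/
def LeviStable (I J : Finset ℕ) (Idl : Ideal (MvPolynomial (Fin m × Fin n) ℂ)) : Prop :=
  ∀ g h, InLevi I g → InLevi J h → ∀ f ∈ Idl, leviAct g h f ∈ Idl

/-- An `L_𝐈 × L_𝐉`-stable ideal `Idl` is `(𝐈,𝐉,≺)`-bicrystalline: the set of exponent
matrices of the standard monomials (monomials not in `init_≺ Idl`) is bicrystal closed. -/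
def IsBicrystalline (m n : ℕ) (I J : Finset ℕ) (ord : TermOrder (Fin m × Fin n))
    (Idl : Ideal (MvPolynomial (Fin m × Fin n) ℂ)) : Prop :=
  LeviStable I J Idl ∧ BicrystalClosed m n I J {M | M ∉ matLT ord Idl}

/-- `z^a` divides `z^b` entrywise, both optional values being defined. -/
def OptDvd (x y : Option (Matrix (Fin m) (Fin n) ℕ)) : Prop :=
  ∃ a b, x = some a ∧ y = some b ∧ ∀ p q, a p q ≤ b p q

/-- `T` is a test set for `(Idl, ≺, φ)`: a finite subset of `Mat_≺ Idl` such that for every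
`M ∈ Mat_≺ Idl` with `φ(M) ≠ ∅` there is `N ∈ T` with `φ(N) ≠ ∅`, `z^N ∣ z^M` and
`z^{φ(N)} ∣ z^{φ(M)}`. -/
def IsTestSet (ord : TermOrder (Fin m × Fin n)) (Idl : Ideal (MvPolynomial (Fin m × Fin n) ℂ))
    (φ : Matrix (Fin m) (Fin n) ℕ → Option (Matrix (Fin m) (Fin n) ℕ))
    (T : Set (Matrix (Fin m) (Fin n) ℕ)) : Prop :=
  T.Finite ∧ T ⊆ matLT ord Idl ∧
  ∀ M ∈ matLT ord Idl, (∃ M', φ M = some M') →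
    ∃ N ∈ T, (∀ p q, N p q ≤ M p q) ∧ OptDvd (φ N) (φ M)

/-- `T` is a test set that is minimal with respect to containment among all test sets. -/
def MinimalTestSet (ord : TermOrder (Fin m × Fin n))
    (Idl : Ideal (MvPolynomial (Fin m × Fin n) ℂ))
    (φ : Matrix (Fin m) (Fin n) ℕ → Option (Matrix (Fin m) (Fin n) ℕ))
    (T : Set (Matrix (Fin m) (Fin n) ℕ)) : Prop :=
  IsTestSet ord Idl φ T ∧ ∀ T', IsTestSet ord Idl φ T' → T' ⊆ T → T' = T

/-- The entry of `M` in 1-based row `r` and column `c` (0 outside the matrix). -/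
def entRow (M : Matrix (Fin m) (Fin n) ℕ) (r : ℕ) (c : Fin n) : ℕ :=
  if h : 1 ≤ r ∧ r ≤ m then M ⟨r - 1, by omega⟩ c else 0

/-- The generic `d × d` minor of `Z` with row set `r` and column set `c`. -/
noncomputable def genMinor (m n d : ℕ) (r : Fin d → Fin m) (c : Fin d → Fin n) :
    MvPolynomial (Fin m × Fin n) ℂ :=
  (Matrix.of fun i j : Fin d => MvPolynomial.X (r i, c j)).det

/-- The exponent vector of the antidiagonal term of the minor with rows `r`, columns `c`. -/
noncomputable def antidiagExp (m n d : ℕ) (r : Fin d → Fin m) (c : Fin d → Fin n) :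
    (Fin m × Fin n) →₀ ℕ :=
  ∑ i : Fin d, Finsupp.single (r i, c i.rev) 1

/-- `ord` is an antidiagonal term order: the lead term of every minor of the generic
matrix `Z` is its antidiagonal term. -/
def IsAntidiagonalOrder (m n : ℕ) (ord : TermOrder (Fin m × Fin n)) : Prop :=
  ∀ d, 0 < d → ∀ (r : Fin d → Fin m) (c : Fin d → Fin n), StrictMono r → StrictMono c →
    IsInitExp ord (genMinor m n d r c) (antidiagExp m n d r c)

/-- All `d × d` minors of the contiguous submatrix `[a,a'] × [b,b']` of `Z`
(1-based bounds). -/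
def minorsOfSub (m n : ℕ) (a a' b b' d : ℕ) : Set (MvPolynomial (Fin m × Fin n) ℂ) :=
  {p | ∃ (r : Fin d → Fin m) (c : Fin d → Fin n), StrictMono r ∧ StrictMono c ∧
    (∀ i, a ≤ (r i).1 + 1 ∧ (r i).1 + 1 ≤ a') ∧
    (∀ j, b ≤ (c j).1 + 1 ∧ (c j).1 + 1 ≤ b') ∧ p = genMinor m n d r c}

/-- `G` is a Gröbner basis of `Idl` with respect to `ord`:
`G ⊆ Idl` and `init_≺ Idl = ⟨init_≺ g : g ∈ G⟩`. -/
def IsGroebnerBasis (ord : TermOrder (Fin m × Fin n))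
    (Idl : Ideal (MvPolynomial (Fin m × Fin n) ℂ))
    (G : Set (MvPolynomial (Fin m × Fin n) ℂ)) : Prop :=
  G ⊆ (Idl : Set (MvPolynomial (Fin m × Fin n) ℂ)) ∧
  initialIdeal ord Idl =
    Ideal.span {p | ∃ g ∈ G, ∃ u, IsInitExp ord g u ∧ p = MvPolynomial.monomial u (1 : ℂ)}

/-- The priority of the variable `z_{ij}` in the variable order
`z_{1n} ≻ z_{1,n-1} ≻ ⋯ ≻ z_{11} ≻ z_{2n} ≻ ⋯ ≻ z_{m1}` (smaller rank = larger variable). -/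
def lexRank (m n : ℕ) (p : Fin m × Fin n) : ℕ := p.1.1 * n + (n - 1 - p.2.1)

/-- `ord` is the (antidiagonal) lexicographic term order determined by the variable order
`z_{1n} ≻ z_{1,n-1} ≻ ⋯ ≻ z_{11} ≻ z_{2n} ≻ ⋯ ≻ z_{m1}`. -/
def IsAntidiagLex (m n : ℕ) (ord : TermOrder (Fin m × Fin n)) : Prop :=
  ∀ u v, ord.le u v ↔
    u = v ∨ ∃ p, u p < v p ∧ ∀ q, lexRank m n q < lexRank m n p → u q = v q

/-- The rank function `r_v(i,j) = #{k ≤ i : v(k) ≤ j}` (1-based), at 0-based `(i,j)`. -/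
def rankP (N : ℕ) (v : Equiv.Perm (Fin N)) (i j : Fin N) : ℕ :=
  (Finset.univ.filter fun k : Fin N => k ≤ i ∧ v k ≤ j).card

/-- The antidiagonal drift `drift_v(i,j) = i + j - 1 - r_v(i,j)` (1-based), at 0-based
`(i,j)`. -/
def driftP (N : ℕ) (v : Equiv.Perm (Fin N)) (i j : Fin N) : ℕ :=
  i.1 + j.1 + 1 - rankP N v i j

/-- The specialized matrix `Z_v`: ones on the permutation positions, zeros southwest-ward
of them (positions `(i,j)` with `j > v(i)` or `i > v⁻¹(j)`), variables elsewhere. -/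
noncomputable def Zv (N : ℕ) (v : Equiv.Perm (Fin N)) :
    Matrix (Fin N) (Fin N) (MvPolynomial (Fin N × Fin N) ℂ) :=
  Matrix.of fun i j =>
    if v i = j then 1 else if v i < j ∨ v.symm j < i then 0 else MvPolynomial.X (i, j)

/-- The `k`-th basic minor `Δ_v^{(k)}`: the determinant of the northwest-justified
`k × k` submatrix of `Z_v`. -/
noncomputable def basicMinor (N k : ℕ) (hk : k ≤ N) (v : Equiv.Perm (Fin N)) :
    MvPolynomial (Fin N × Fin N) ℂ :=
  (Matrix.of fun i j : Fin k => Zv N v (Fin.castLE hk i) (Fin.castLE hk j)).det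

/-- The one-coordinate index-deletion map underlying `φ_{i,j}`: delete the index `i`
from `[n+1]`, renumbering the indices above `i` down by one. -/
def delIdx {N : ℕ} (i a : Fin (N + 1)) (h : a ≠ i) : Fin N :=
  if hlt : a.1 < i.1 then ⟨a.1, by have := i.isLt; omega⟩
  else ⟨a.1 - 1, by
    have h1 := a.isLt
    have h2 : a.1 ≠ i.1 := fun hh => h (Fin.ext hh)
    omega⟩

/-- Row insertion `T ← x` for a tableau given as its list of rows (top to bottom). -/
def rowInsert : List (List ℕ) → ℕ → List (List ℕ)
  | [], x => [[x]]
  | row :: rest, x =>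
    match row.findIdx? (fun y => decide (x < y)) with
    | none => (row ++ [x]) :: rest
    | some k => (row.set k x) :: rowInsert rest (row.getD k 0)

/-- The insertion tableau `tab(w)` of a word `w`. -/
def tab (w : List ℕ) : List (List ℕ) := w.foldl rowInsert []

/-- The `RSK` correspondence: `RSK(M) = (tab(row(M)), tab(col(M)))`. -/
def RSKmap (M : Matrix (Fin m) (Fin n) ℕ) : List (List ℕ) × List (List ℕ) :=
  (tab (rowWord M), tab (colWord M))

/-- The column reading word of a tableau, with each letter labelled by its box `(row, col)`:
entries are read along columns bottom-to-top, left-to-right. -/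
def tabWordLbl (T : List (List ℕ)) : List (ℕ × (ℕ × ℕ)) :=
  (List.range (T.getD 0 []).length).flatMap fun j =>
    ((List.range T.length).reverse).filterMap fun r =>
      ((T.getD r [])[j]?).map fun x => (x, (r, j))

/-- The column reading word `word(T)` (columns bottom-to-top, left-to-right). -/
def tabWord (T : List (List ℕ)) : List ℕ := (tabWordLbl T).map Prod.fst

/-- Replace the entry of `T` in box `(r, j)` by `v`. -/
def setBox (T : List (List ℕ)) (r j v : ℕ) : List (List ℕ) :=
  T.set r ((T.getD r []).set j v)

/-- The tableau crystal lowering operator `f_i`: change the `i` of `T` corresponding to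
the rightmost unmatched `)` of `bracket_i(word(T))` into an `i + 1` (or `∅`). -/
def fTab (i : ℕ) (T : List (List ℕ)) : Option (List (List ℕ)) :=
  (lastUnmatched i (i + 1) (tabWordLbl T) 0).map fun p => setBox T p.1 p.2 (i + 1)

/-- The tableau crystal raising operator `e_i`: change the `i + 1` of `T` corresponding to
the leftmost unmatched `(` of `bracket_i(word(T))` into an `i` (or `∅`). -/
def eTab (i : ℕ) (T : List (List ℕ)) : Option (List (List ℕ)) :=
  (lastUnmatched (i + 1) i (tabWordLbl T).reverse 0).map fun p => setBox T p.1 p.2 i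

/-- `T` (a list of rows, top to bottom) is a semistandard Young tableau with positive
integer entries. -/
def IsSSYT (T : List (List ℕ)) : Prop :=
  (∀ r ∈ T, r ≠ []) ∧
  (∀ r ∈ T, List.Chain' (· ≤ ·) r) ∧
  (∀ i, (T.getD (i + 1) []).length ≤ (T.getD i []).length) ∧
  (∀ i j, j < (T.getD (i + 1) []).length →
    (T.getD i []).getD j 0 < (T.getD (i + 1) []).getD j 0) ∧
  (∀ r ∈ T, ∀ x ∈ r, 1 ≤ x)

/-- `w` is `[a,b]`-ballot: every initial segment contains at least as many `i`s as
`(i+1)`s, for each `i ∈ [a, b-1]`. -/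
def IsBallot (a b : ℕ) (w : List ℕ) : Prop :=
  ∀ k i, a ≤ i → i + 1 ≤ b → (w.take k).count (i + 1) ≤ (w.take k).count i

/-- `T` is an `[a,b]`-Littlewood–Richardson tableau: `revword(T)|_{[a,b]}` is
`[a,b]`-ballot. -/
def IsLRInterval (a b : ℕ) (T : List (List ℕ)) : Prop :=
  IsBallot a b (((tabWord T).reverse).filter fun x => decide (a ≤ x ∧ x ≤ b))

/-- `T` is `𝐊`-LR for `𝐊 = {0 = k_0 < ⋯ < k_t = ℓ}`: `T` is `[k_{α-1}+1, k_α]`-LR for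
every pair of consecutive elements of `𝐊`. -/
def IsKLR (K : Finset ℕ) (T : List (List ℕ)) : Prop :=
  ∀ a b, a ∈ K → b ∈ K → a < b → (∀ x ∈ K, ¬(a < x ∧ x < b)) → IsLRInterval (a + 1) b T

/-- The `[a,b]`-width of a word: the maximum length of a strictly decreasing subsequence
of the restriction `u|_{[a,b]}`. -/
noncomputable def widthInterval (a b : ℕ) (u : List ℕ) : ℕ :=
  sSup {d | ∃ s : List ℕ, s.Sublist (u.filter fun x => decide (a ≤ x ∧ x ≤ b)) ∧
    List.Chain' (· > ·) s ∧ s.length = d}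

/-- The entry of `T` in box `p = (row, col)`. -/
def tabEntry (T : List (List ℕ)) (p : ℕ × ℕ) : ℕ := (T.getD p.1 []).getD p.2 0

/-- The `[a,b]`-width of a tableau: the maximum length of an `[a,b]`-antidiagonal, i.e. a
sequence of boxes of `T` from distinct rows with entries in `[a,b]`, each box weakly east
and strictly north of the previous one, whose entries strictly decrease read bottom to
top. -/
noncomputable def tabWidth (a b : ℕ) (T : List (List ℕ)) : ℕ :=
  sSup {d | ∃ L : List (ℕ × ℕ),
    (∀ p ∈ L, p.1 < T.length ∧ p.2 < (T.getD p.1 []).length ∧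
      a ≤ tabEntry T p ∧ tabEntry T p ≤ b) ∧
    List.Chain' (fun p q => q.1 < p.1 ∧ p.2 ≤ q.2 ∧ tabEntry T q < tabEntry T p) L ∧
    L.length = d}

/-- The maximum length of a sequence of nonzero entries of `M` in antidiagonal position
(row indices strictly decreasing, column indices strictly increasing along the sequence)
with all (1-based) row indices in `[a,b]`. -/
noncomputable def rowAntidiagWidth (a b : ℕ) (M : Matrix (Fin m) (Fin n) ℕ) : ℕ :=
  sSup {d | ∃ L : List (Fin m × Fin n),
    (∀ p ∈ L, M p.1 p.2 ≠ 0 ∧ a ≤ p.1.1 + 1 ∧ p.1.1 + 1 ≤ b) ∧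
    List.Chain' (fun p q => q.1 < p.1 ∧ p.2 < q.2) L ∧
    L.length = d}

/-- As `rowAntidiagWidth`, but with all (1-based) column indices in `[a,b]`. -/
noncomputable def colAntidiagWidth (a b : ℕ) (M : Matrix (Fin m) (Fin n) ℕ) : ℕ :=
  sSup {d | ∃ L : List (Fin m × Fin n),
    (∀ p ∈ L, M p.1 p.2 ≠ 0 ∧ a ≤ p.2.1 + 1 ∧ p.2.1 + 1 ≤ b) ∧
    List.Chain' (fun p q => q.1 < p.1 ∧ p.2 < q.2) L ∧
    L.length = d}

/-- An elementary Knuth transformation: `prq ≡ rpq` for `p ≤ q < r`, and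
`qpr ≡ qrp` for `p < q ≤ r`. -/
inductive KnuthStep : List ℕ → List ℕ → Prop
  | swap1 (u v : List ℕ) (p q r : ℕ) (h1 : p ≤ q) (h2 : q < r) :
      KnuthStep (u ++ p :: r :: q :: v) (u ++ r :: p :: q :: v)
  | swap2 (u v : List ℕ) (p q r : ℕ) (h1 : p < q) (h2 : q ≤ r) :
      KnuthStep (u ++ q :: p :: r :: v) (u ++ q :: r :: p :: v)

/-- Knuth equivalence of words. -/
def KnuthEquiv : List ℕ → List ℕ → Prop := Relation.EqvGen KnuthStep

end GCS

namespace GCS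

/-- Insertion of a letter in one row: new row and bumped letter. -/
def rins : List ℕ → ℕ → List ℕ × List ℕ
  | [], x => ([x], [])
  | y :: R, x => if x < y then (x :: R, [y]) else (y :: (rins R x).1, (rins R x).2)

/-- Insertion of a word in one row: new row and bumped word. -/
def rinsW : List ℕ → List ℕ → List ℕ × List ℕ
  | R, [] => (R, [])
  | R, x :: w => ((rinsW (rins R x).1 w).1, (rins R x).2 ++ (rinsW (rins R x).1 w).2)

theorem rowInsert_cons (R : List ℕ) (T : List (List ℕ)) (x : ℕ) :
    rowInsert (R :: T) x = (rins R x).1 :: List.foldl rowInsert T (rins R x).2 := by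
  rw [rowInsert]
  have h : (match R.findIdx? (fun y => decide (x < y)) with
    | none => (R ++ [x], ([] : List ℕ))
    | some k => (R.set k x, [R.getD k 0])) = rins R x := by
    induction R with
    | nil => simp [rins]
    | cons y R ih =>
      rw [List.findIdx?_cons, rins]
      by_cases hxy : x < y
      · simp [hxy]
      · simp only [hxy, decide_false, Bool.false_eq_true, if_false]
        rw [← ih]
        cases R.findIdx? (fun y => decide (x < y)) <;> simp
  rw [← h]
  cases R.findIdx? (fun y => decide (x < y)) <;> simp

theorem foldl_rowInsert_cons (w : List ℕ) : ∀ (R : List ℕ) (T : List (List ℕ)),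
    List.foldl rowInsert (R :: T) w = (rinsW R w).1 :: List.foldl rowInsert T (rinsW R w).2 := by
  induction w with
  | nil => intro R T; simp [rinsW]
  | cons x w ih =>
    intro R T
    simp [rinsW, rowInsert_cons, ih]

theorem foldl_rowInsert_nil (w : List ℕ) (hw : w ≠ []) :
    List.foldl rowInsert [] w = List.foldl rowInsert [[]] w := by
  cases w with
  | nil => exact absurd rfl hw
  | cons x w => simp [rowInsert]

/-- Three-letter Knuth relations, oriented. -/
inductive K3 : List ℕ → List ℕ → Prop
  | k1 (p q r : ℕ) (h1 : p ≤ q) (h2 : q < r) : K3 [p, r, q] [r, p, q]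
  | k2 (p q r : ℕ) (h1 : p < q) (h2 : q ≤ r) : K3 [q, p, r] [q, r, p]

theorem rins_bump_gt {R : List ℕ} {x z : ℕ} (h : z ∈ (rins R x).2) : x < z ∧ z ∈ R := by
  induction R with
  | nil => simp [rins] at h
  | cons y R ih =>
    rw [rins] at h
    split_ifs at h with hxy
    · simp at h; subst h; simp [hxy]
    · have := ih h; simp [this.1, this.2]

theorem rins_len (R : List ℕ) (x : ℕ) : (rins R x).2 = [] ∨ ∃ z, (rins R x).2 = [z] := by
  induction R with
  | nil => simp [rins]
  | cons y R ih =>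
    rw [rins]
    split_ifs with hxy
    · simp
    · exact ih

theorem rins_mem (R : List ℕ) (x z : ℕ) (h : z ∈ (rins R x).1) : z = x ∨ z ∈ R := by
  induction R with
  | nil => simpa [rins] using h
  | cons y R ih =>
    rw [rins] at h
    split_ifs at h with hxy
    · simp at h ⊢; tauto
    · simp at h ⊢; tauto

theorem rins_sorted {R : List ℕ} (hR : R.Pairwise (· ≤ ·)) (x : ℕ) :
    (rins R x).1.Pairwise (· ≤ ·) := by
  induction R with
  | nil => simp [rins]
  | cons y R ih =>
    rw [List.pairwise_cons] at hR
    rw [rins]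
    split_ifs with hxy
    · simp only [List.pairwise_cons]
      exact ⟨fun a ha => by have := hR.1 a ha; omega, hR.2⟩
    · simp only [List.pairwise_cons]
      refine ⟨fun a ha => ?_, ih hR.2⟩
      rcases rins_mem _ _ _ ha with h | h
      · omega
      · exact hR.1 a h

/-- After inserting `r`, inserting a smaller `q` bumps a letter `≤ r`. -/
theorem rins_rins_lt (R : List ℕ) (q r : ℕ) (h : q < r) :
    ∃ z, (rins (rins R r).1 q).2 = [z] ∧ z ≤ r := by
  induction R with
  | nil => simp [rins, h]
  | cons y R ih =>
    by_cases hry : r < y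
    · simp [rins, hry, h]
    · by_cases hqy : q < y
      · simp [rins, hry, hqy]; omega
      · simpa [rins, hry, hqy] using ih

/-- Row bumping lemma for a weakly increasing pair. -/
theorem rins_rins_le (R : List ℕ) (hR : R.Pairwise (· ≤ ·)) (q r : ℕ) (h : q ≤ r) :
    (rins (rins R q).1 r).2 = [] ∨ ∃ z z', (rins R q).2 = [z] ∧
      (rins (rins R q).1 r).2 = [z'] ∧ z ≤ z' := by
  induction R with
  | nil => have : ¬ r < q := by omega
           simp [rins, this]
  | cons y R ih =>
    rw [List.pairwise_cons] at hR
    by_cases hqy : q < y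
    · have : ¬ r < q := by omega
      simp only [rins, hqy, if_true, this, if_false]
      rcases rins_len R r with h1 | ⟨z, h1⟩
      · exact Or.inl h1
      · refine Or.inr ⟨y, z, rfl, h1, hR.1 z ?_⟩
        exact (rins_bump_gt (by rw [h1]; simp)).2
    · have : ¬ r < y := by omega
      simpa [rins, hqy, this] using ih hR.2

theorem rinsW_K3 (R : List ℕ) (hR : R.Pairwise (· ≤ ·)) (w w' : List ℕ) (h : K3 w w') :
    (rinsW R w).1 = (rinsW R w').1 ∧
    ((rinsW R w).2 = (rinsW R w').2 ∨ K3 (rinsW R w).2 (rinsW R w').2 ∨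
      K3 (rinsW R w').2 (rinsW R w).2) := by
  induction R with
  | nil =>
    cases h with
    | k1 p q r h1 h2 =>
      have e1 : ¬ r < p := by omega
      have e2 : p < r := by omega
      have e3 : ¬ q < p := by omega
      simp [rinsW, rins, e1, e2, e3, h2]
    | k2 p q r h1 h2 =>
      have e1 : ¬ r < p := by omega
      have e2 : ¬ r < q := by omega
      simp [rinsW, rins, e1, e2, h1]
  | cons y R ih =>
    rw [List.pairwise_cons] at hR
    have ih := ih hR.2
    cases h with
    | k1 p q r h1 h2 =>
      by_cases hp : p < y
      · by_cases hr : r < y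
        · -- r < y
          have e1 : ¬ r < p := by omega
          have e2 : p < r := by omega
          have e3 : ¬ q < p := by omega
          cases R with
          | nil => simp [rinsW, rins, hp, hr, e1, e2, e3, h2]
          | cons z R =>
            have hz := hR.1 z (by simp)
            have e4 : r < z := by omega
            have e5 : q < z := by omega
            simp only [rinsW, rins, hp, hr, e1, e2, e3, h2, e4, e5, if_true, if_false,
              true_and]
            exact Or.inr (Or.inr (K3.k2 _ _ _ hr hz))
        · have e1 : ¬ r < p := by omega
          have e3 : ¬ q < p := by omega
          simp only [rinsW, rins, hp, hr, e1, e3, if_true, if_false, true_and]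
          obtain ⟨z, hz, hz'⟩ := rins_rins_lt R q r h2
          rw [hz]
          have hb := rins_bump_gt (R := (rins R r).1) (x := q) (z := z) (by rw [hz]; simp)
          have hyz : y ≤ z := by
            rcases rins_mem _ _ _ hb.2 with h | h
            · omega
            · exact hR.1 z h
          rcases rins_len R r with h | ⟨u, h⟩
          · rw [h]; left; rfl
          · rw [h]
            have hu := rins_bump_gt (R := R) (x := r) (z := u) (by rw [h]; simp)
            right; left
            exact K3.k1 _ _ _ hyz (by omega)
      · have e1 : ¬ r < y := by omega
        have e3 : ¬ q < y := by omega
        have := ih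
        simpa [rinsW, rins, hp, e1, e3] using this
    | k2 p q r h1 h2 =>
      by_cases hp : p < y
      · by_cases hq : q < y
        · have e1 : ¬ r < p := by omega
          have e2 : ¬ r < q := by omega
          simp only [rinsW, rins, hq, h1, e1, e2, if_true, if_false, true_and]
          rcases rins_len R r with h | ⟨u, h⟩
          · rw [h]; left; rfl
          · rw [h]
            have hu := rins_bump_gt (R := R) (x := r) (z := u) (by rw [h]; simp)
            right; left
            exact K3.k2 _ _ _ hq (hR.1 u hu.2)
        · have e1 : ¬ r < p := by omega
          have e2 : ¬ r < y := by omega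
          simp only [rinsW, rins, hp, hq, e1, e2, if_true, if_false, true_and]
          rcases rins_rins_le R hR.2 q r h2 with h | ⟨z, z', h, h', hzz⟩
          · rw [h]; left; simp
          · rw [h, h']
            have hu := rins_bump_gt (R := R) (x := q) (z := z) (by rw [h]; simp)
            right; left
            exact K3.k2 _ _ _ (by omega) hzz
      · have e1 : ¬ r < y := by omega
        have e3 : ¬ q < y := by omega
        have := ih
        simpa [rinsW, rins, hp, e1, e3] using this

theorem foldl_K3 (T : List (List ℕ)) : (∀ R ∈ T, R.Pairwise (· ≤ ·)) → ∀ (w w' : List ℕ),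
    K3 w w' → List.foldl rowInsert T w = List.foldl rowInsert T w' := by
  induction T with
  | nil =>
    intro _ w w' h
    cases h with
    | k1 p q r h1 h2 =>
      have e1 : ¬ r < p := by omega
      have e2 : p < r := by omega
      have e3 : ¬ q < p := by omega
      simp [rowInsert, List.findIdx?_cons, e1, e2, e3, h2]
    | k2 p q r h1 h2 =>
      have e1 : ¬ r < p := by omega
      have e2 : ¬ r < q := by omega
      simp [rowInsert, List.findIdx?_cons, e1, e2, h1]
  | cons R T ih =>
    intro hT w w' h
    rw [foldl_rowInsert_cons, foldl_rowInsert_cons]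
    have hT' := ih (fun S hS => hT S (by simp [hS]))
    obtain ⟨h1, h2⟩ := rinsW_K3 R (hT R (by simp)) w w' h
    rw [h1]
    rcases h2 with h2 | h2 | h2
    · rw [h2]
    · rw [hT' _ _ h2]
    · rw [hT' _ _ h2]

theorem rowInsert_rows_sorted (T : List (List ℕ)) (x : ℕ)
    (hT : ∀ R ∈ T, R.Pairwise (· ≤ ·)) : ∀ R ∈ rowInsert T x, R.Pairwise (· ≤ ·) := by
  induction T generalizing x with
  | nil => simp [rowInsert]
  | cons R T ih =>
    rw [rowInsert_cons]
    intro S hS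
    rw [List.mem_cons] at hS
    rcases hS with rfl | hS
    · exact rins_sorted (hT R (by simp)) x
    · have hT' : ∀ R ∈ T, R.Pairwise (· ≤ ·) := fun S hS => hT S (by simp [hS])
      rcases rins_len R x with h | ⟨u, h⟩
      · rw [h] at hS; exact hT' S hS
      · rw [h] at hS; exact ih u hT' S hS

theorem foldl_rows_sorted (w : List ℕ) (T : List (List ℕ))
    (hT : ∀ R ∈ T, R.Pairwise (· ≤ ·)) :
    ∀ R ∈ List.foldl rowInsert T w, R.Pairwise (· ≤ ·) := by
  induction w generalizing T with
  | nil => exact hT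
  | cons x w ih => exact ih _ (rowInsert_rows_sorted T x hT)

theorem tab_rows_sorted (w : List ℕ) : ∀ R ∈ tab w, R.Pairwise (· ≤ ·) :=
  foldl_rows_sorted w [] (by simp)

theorem knuthStep_iff (w w' : List ℕ) : KnuthStep w w' ↔
    ∃ u a b v, K3 a b ∧ w = u ++ (a ++ v) ∧ w' = u ++ (b ++ v) := by
  constructor
  · rintro (⟨u, v, p, q, r, h1, h2⟩ | ⟨u, v, p, q, r, h1, h2⟩)
    · exact ⟨u, _, _, v, K3.k1 p q r h1 h2, rfl, rfl⟩
    · exact ⟨u, _, _, v, K3.k2 p q r h1 h2, rfl, rfl⟩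
  · rintro ⟨u, a, b, v, h, rfl, rfl⟩
    cases h with
    | k1 p q r h1 h2 => exact KnuthStep.swap1 u v p q r h1 h2
    | k2 p q r h1 h2 => exact KnuthStep.swap2 u v p q r h1 h2

theorem KnuthEquiv.tab_eq {w w' : List ℕ} (h : KnuthEquiv w w') : tab w = tab w' := by
  induction h with
  | rel x y h =>
    obtain ⟨u, a, b, v, hk, rfl, rfl⟩ := (knuthStep_iff _ _).1 h
    unfold tab
    rw [List.foldl_append, List.foldl_append, List.foldl_append, List.foldl_append,
      foldl_K3 _ (foldl_rows_sorted u [] (by simp)) a b hk]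
  | refl x => rfl
  | symm x y _ ih => exact ih.symm
  | trans x y z _ _ h1 h2 => exact h1.trans h2

theorem KnuthEquiv.rfl' (w : List ℕ) : KnuthEquiv w w := Relation.EqvGen.refl w

theorem KnuthEquiv.sym {w w' : List ℕ} (h : KnuthEquiv w w') : KnuthEquiv w' w :=
  Relation.EqvGen.symm _ _ h

theorem KnuthEquiv.tr {w w' w'' : List ℕ} (h : KnuthEquiv w w') (h' : KnuthEquiv w' w'') :
    KnuthEquiv w w'' :=
  Relation.EqvGen.trans _ _ _ h h'

theorem KnuthEquiv.of_K3 {a b : List ℕ} (h : K3 a b) (u v : List ℕ) :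
    KnuthEquiv (u ++ (a ++ v)) (u ++ (b ++ v)) :=
  Relation.EqvGen.rel _ _ ((knuthStep_iff _ _).2 ⟨u, a, b, v, h, rfl, rfl⟩)

theorem KnuthEquiv.ctx {w w' : List ℕ} (h : KnuthEquiv w w') (s t : List ℕ) :
    KnuthEquiv (s ++ (w ++ t)) (s ++ (w' ++ t)) := by
  induction h with
  | rel x y h =>
    obtain ⟨u, a, b, v, hk, rfl, rfl⟩ := (knuthStep_iff _ _).1 h
    have := KnuthEquiv.of_K3 hk (s ++ u) (v ++ t)
    simpa using this
  | refl x => exact KnuthEquiv.rfl' _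
  | symm x y _ ih => exact ih.sym
  | trans x y z _ _ h1 h2 => exact h1.tr h2

theorem KnuthEquiv.left {w w' : List ℕ} (h : KnuthEquiv w w') (s : List ℕ) :
    KnuthEquiv (s ++ w) (s ++ w') := by
  simpa using h.ctx s []

theorem KnuthEquiv.right {w w' : List ℕ} (h : KnuthEquiv w w') (t : List ℕ) :
    KnuthEquiv (w ++ t) (w' ++ t) := by
  simpa using h.ctx [] t

/-- A small letter moves left in a weakly increasing row whose first letter is larger. -/
theorem knuth_moveleft (y : ℕ) (R : List ℕ) (x : ℕ) (hR : (y :: R).Pairwise (· ≤ ·))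
    (h : x < y) : KnuthEquiv (y :: R ++ [x]) (y :: x :: R) := by
  induction R generalizing y with
  | nil => exact KnuthEquiv.rfl' _
  | cons z R ih =>
    rw [List.pairwise_cons] at hR
    have hz := hR.1 z (by simp)
    have h1 := (ih z hR.2 (by omega)).left [y]
    have h2 := KnuthEquiv.of_K3 (K3.k2 x y z h hz) [] R
    simpa using h1.tr (by simpa using h2.sym)

theorem rins_knuth (R : List ℕ) (x : ℕ) (hR : R.Pairwise (· ≤ ·)) :
    KnuthEquiv (R ++ [x]) ((rins R x).2 ++ (rins R x).1) := by
  induction R with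
  | nil => exact KnuthEquiv.rfl' _
  | cons y R ih =>
    by_cases hxy : x < y
    · simpa [rins, hxy] using knuth_moveleft y R x hR hxy
    · simp only [rins, hxy, if_false]
      rw [List.pairwise_cons] at hR
      have h1 := (ih hR.2).left [y]
      rcases rins_len R x with h | ⟨u, h⟩
      · rw [h] at h1 ⊢; simpa using h1
      · rw [h] at h1 ⊢
        have hu := rins_bump_gt (R := R) (x := x) (z := u) (by rw [h]; simp)
        -- the first letter of the new row
        obtain ⟨a, S, ha, ha1, ha2⟩ : ∃ a S, (rins R x).1 = a :: S ∧ y ≤ a ∧ a < u := by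
          cases R with
          | nil => simp [rins] at h
          | cons b R =>
            by_cases hxb : x < b
            · exact ⟨x, R, by simp [rins, hxb], by omega, hu.1⟩
            · exact ⟨b, (rins R x).1, by simp only [rins, hxb, if_false],
                hR.1 b (by simp), by omega⟩
        rw [ha] at h1 ⊢
        refine KnuthEquiv.tr (by simpa using h1) ?_
        simpa using KnuthEquiv.of_K3 (K3.k1 y a u ha1 ha2) [] S

theorem rinsW_knuth (w : List ℕ) (R : List ℕ) (hR : R.Pairwise (· ≤ ·)) :
    KnuthEquiv (R ++ w) ((rinsW R w).2 ++ (rinsW R w).1) := by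
  induction w generalizing R with
  | nil => simpa [rinsW] using KnuthEquiv.rfl' R
  | cons x w ih =>
    have h1 := (rins_knuth R x hR).right w
    have h2 := (ih _ (rins_sorted hR x)).left (rins R x).2
    simp only [rinsW]
    refine KnuthEquiv.tr (by simpa using h1) ?_
    simpa using h2

/-- The row reading word. -/
def rowRead (T : List (List ℕ)) : List ℕ := T.reverse.flatten

theorem rowInsert_knuth (T : List (List ℕ)) (x : ℕ) (hT : ∀ R ∈ T, R.Pairwise (· ≤ ·)) :
    KnuthEquiv (rowRead T ++ [x]) (rowRead (rowInsert T x)) := by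
  induction T generalizing x with
  | nil => exact KnuthEquiv.rfl' _
  | cons R T ih =>
    have hT' : ∀ R ∈ T, R.Pairwise (· ≤ ·) := fun S hS => hT S (by simp [hS])
    have h1 := (rins_knuth R x (hT R (by simp))).left (rowRead T)
    rw [rowInsert_cons]
    rcases rins_len R x with h | ⟨u, h⟩
    · rw [h] at h1 ⊢
      simpa [rowRead] using h1
    · rw [h] at h1 ⊢
      have h2 := (ih u hT').right (rins R x).1
      have h3 := h1.tr (by simpa using h2)
      simpa [rowRead] using h3

theorem knuth_rowRead_tab (w : List ℕ) : KnuthEquiv w (rowRead (tab w)) := by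
  suffices h : ∀ T : List (List ℕ), (∀ R ∈ T, R.Pairwise (· ≤ ·)) →
      KnuthEquiv (rowRead T ++ w) (rowRead (List.foldl rowInsert T w)) by
    simpa [rowRead, tab] using h [] (by simp)
  induction w with
  | nil => intro T _; simpa using KnuthEquiv.rfl' _
  | cons x w ih =>
    intro T hT
    have h1 := (rowInsert_knuth T x hT).right w
    have h2 := ih _ (rowInsert_rows_sorted T x hT)
    refine KnuthEquiv.tr (by simpa using h1) ?_
    simpa using h2

end GCS

namespace GCS

/-- Row `S` can sit below row `R` in a semistandard tableau. -/
def ColLt (R S : List ℕ) : Prop :=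
  ∀ (j y : ℕ), S[j]? = some y → ∃ x, R[j]? = some x ∧ x < y

theorem ColLt.trans {R S T : List ℕ} (h : ColLt R S) (h' : ColLt S T) : ColLt R T := by
  intro j y hy
  obtain ⟨x, hx, hxy⟩ := h' j y hy
  obtain ⟨z, hz, hzx⟩ := h j x hx
  exact ⟨z, hz, by omega⟩

instance : IsTrans (List ℕ) ColLt := ⟨fun _ _ _ => ColLt.trans⟩

theorem colLt_nil (R : List ℕ) : ColLt R [] := by
  intro j y h; simp at h

theorem not_colLt_nil_cons (s : ℕ) (S : List ℕ) : ¬ ColLt [] (s :: S) := by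
  intro h
  obtain ⟨x, hx, _⟩ := h 0 s (by simp)
  simp at hx

theorem colLt_cons (r s : ℕ) (R S : List ℕ) :
    ColLt (r :: R) (s :: S) ↔ r < s ∧ ColLt R S := by
  constructor
  · intro h
    constructor
    · obtain ⟨x, hx, hxs⟩ := h 0 s (by simp)
      simp at hx; omega
    · intro j y hy
      obtain ⟨x, hx, hxs⟩ := h (j + 1) y (by simpa using hy)
      exact ⟨x, by simpa using hx, hxs⟩
  · rintro ⟨h1, h2⟩ j y hy
    cases j with
    | zero => simp at hy; subst hy; exact ⟨r, by simp, h1⟩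
    | succ j =>
      obtain ⟨x, hx, hxs⟩ := h2 j y (by simpa using hy)
      exact ⟨x, by simpa using hx, hxs⟩

theorem ColLt.length_le {R S : List ℕ} (h : ColLt R S) : S.length ≤ R.length := by
  by_contra hc
  push Not at hc
  obtain ⟨x, hx, _⟩ := h R.length S[R.length] (by simp)
  simp at hx

/-- Semistandard tableaux, as needed here. -/
structure SS (T : List (List ℕ)) : Prop where
  ne : ∀ R ∈ T, R ≠ []
  sorted : ∀ R ∈ T, R.Pairwise (· ≤ ·)
  col : T.Pairwise ColLt

theorem SS.tail {R : List ℕ} {T : List (List ℕ)} (h : SS (R :: T)) : SS T :=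
  ⟨fun S hS => h.ne S (by simp [hS]), fun S hS => h.sorted S (by simp [hS]),
    (List.pairwise_cons.1 h.col).2⟩

theorem colLt_rins_left {R S : List ℕ} (h : ColLt R S) (x : ℕ) : ColLt (rins R x).1 S := by
  induction R generalizing S with
  | nil =>
    cases S with
    | nil => exact colLt_nil _
    | cons s S => exact absurd h (not_colLt_nil_cons s S)
  | cons r R ih =>
    cases S with
    | nil => exact colLt_nil _
    | cons s S =>
      rw [colLt_cons] at h
      rw [rins]
      split_ifs with hx
      · rw [colLt_cons]; exact ⟨by omega, h.2⟩
      · rw [colLt_cons]; exact ⟨h.1, ih h.2⟩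

theorem colLt_rins_rins {R S : List ℕ} (h : ColLt R S) (x u : ℕ) (hu : (rins R x).2 = [u]) :
    ColLt (rins R x).1 (rins S u).1 := by
  induction R generalizing S with
  | nil => simp [rins] at hu
  | cons r R ih =>
    by_cases hx : x < r
    · have : u = r := by simpa [rins, hx] using hu.symm
      subst this
      cases S with
      | nil => simp [rins, hx, colLt_cons, colLt_nil]
      | cons s S =>
        rw [colLt_cons] at h
        simp [rins, hx, colLt_cons, h]
    · have hu' : (rins R x).2 = [u] := by simpa [rins, hx] using hu
      have hb := rins_bump_gt (R := R) (x := x) (z := u) (by rw [hu']; simp)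
      have hru : r < u := by omega
      simp only [rins, hx, if_false]
      cases S with
      | nil => simp [rins, colLt_cons, colLt_nil, hru]
      | cons s S =>
        rw [colLt_cons] at h
        by_cases hus : u < s
        · simp only [rins, hus, if_true, colLt_cons]
          exact ⟨hru, colLt_rins_left h.2 x⟩
        · simp only [rins, hus, if_false, colLt_cons]
          exact ⟨h.1, ih h.2 hu'⟩

theorem rins_ne_nil (R : List ℕ) (x : ℕ) : (rins R x).1 ≠ [] := by
  cases R with
  | nil => simp [rins]
  | cons y R => rw [rins]; split_ifs <;> simp

theorem rowInsert_ne (T : List (List ℕ)) (x : ℕ) (hT : ∀ R ∈ T, R ≠ []) :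
    ∀ R ∈ rowInsert T x, R ≠ [] := by
  induction T generalizing x with
  | nil => simp [rowInsert]
  | cons R T ih =>
    have hT' : ∀ R ∈ T, R ≠ [] := fun S hS => hT S (by simp [hS])
    rw [rowInsert_cons]
    intro S hS
    rw [List.mem_cons] at hS
    rcases hS with rfl | hS
    · exact rins_ne_nil R x
    · rcases rins_len R x with h | ⟨u, h⟩
      · rw [h] at hS; exact hT' S hS
      · rw [h] at hS; exact ih u hT' S hS

theorem rowInsert_chain (T : List (List ℕ)) (x : ℕ) (hT : T.IsChain ColLt) :
    (rowInsert T x).IsChain ColLt := by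
  induction T generalizing x with
  | nil => simp [rowInsert]
  | cons R T ih =>
    rw [rowInsert_cons]
    rcases rins_len R x with h | ⟨u, h⟩
    · rw [h]
      cases T with
      | nil => simp
      | cons S T =>
        rw [List.isChain_cons_cons] at hT
        simp only [List.foldl_nil, List.isChain_cons_cons]
        exact ⟨colLt_rins_left hT.1 x, hT.2⟩
    · rw [h]
      simp only [List.foldl_cons, List.foldl_nil]
      cases T with
      | nil =>
        simp only [rowInsert, List.isChain_cons_cons, List.isChain_singleton, and_true]
        exact colLt_rins_rins (colLt_nil R) x u h
      | cons S T =>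
        rw [List.isChain_cons_cons] at hT
        have h2 := ih u hT.2
        rw [rowInsert_cons] at h2 ⊢
        rw [List.isChain_cons_cons]
        exact ⟨colLt_rins_rins hT.1 x u h, h2⟩

theorem rowInsert_SS {T : List (List ℕ)} (h : SS T) (x : ℕ) : SS (rowInsert T x) :=
  ⟨rowInsert_ne T x h.ne, rowInsert_rows_sorted T x h.sorted,
    List.isChain_iff_pairwise.1 (rowInsert_chain T x (List.isChain_iff_pairwise.2 h.col))⟩

theorem tab_SS (w : List ℕ) : SS (tab w) := by
  suffices h : ∀ T, SS T → SS (List.foldl rowInsert T w) from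
    h [] ⟨by simp, by simp, by simp⟩
  induction w with
  | nil => intro T h; exact h
  | cons x w ih => intro T h; exact ih _ (rowInsert_SS h x)

/-- The `k`-th column, top to bottom. -/
def colj (T : List (List ℕ)) (k : ℕ) : List ℕ := T.filterMap (fun R => R[k]?)

/-- The first `k` columns. -/
def tr (k : ℕ) (T : List (List ℕ)) : List (List ℕ) :=
  (T.map (List.take k)).filter (fun R => !R.isEmpty)

theorem rinsW_append (u v : List ℕ) (R : List ℕ) :
    rinsW R (u ++ v) = ((rinsW (rinsW R u).1 v).1, (rinsW R u).2 ++ (rinsW (rinsW R u).1 v).2) := by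
  induction u generalizing R with
  | nil => simp [rinsW]
  | cons x u ih => simp [rinsW, ih]

theorem rins_append_le (R S : List ℕ) (c : ℕ) (h : ∀ x ∈ R, x ≤ c) :
    rins (R ++ S) c = (R ++ (rins S c).1, (rins S c).2) := by
  induction R with
  | nil => simp
  | cons y R ih =>
    have : ¬ c < y := by have := h y (by simp); omega
    simp [rins, this, ih (fun x hx => h x (by simp [hx]))]

theorem rinsW_column (R : List ℕ) (cs : List ℕ) (c : ℕ) (hR : ∀ x ∈ R, x ≤ c)
    (hc : (c :: cs).Pairwise (· < ·)) :
    rinsW R (cs.reverse ++ [c]) = (R ++ [c], cs.reverse) := by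
  induction cs generalizing c with
  | nil =>
    have := rins_append_le R [] c hR
    simp only [List.append_nil] at this
    simp [rinsW, this, rins]
  | cons d ds ih =>
    rw [List.pairwise_cons] at hc
    have hcd := hc.1 d (by simp)
    have h1 := ih d (fun x hx => by have := hR x hx; omega) hc.2
    rw [rinsW_append, List.reverse_cons, h1]
    have h2 := rins_append_le R [d] c hR
    simp [rinsW, h2, rins, hcd]

theorem SS.length_le {R : List ℕ} {T : List (List ℕ)} (h : SS (R :: T)) :
    ∀ S ∈ T, S.length ≤ R.length :=
  fun S hS => ((List.pairwise_cons.1 h.col).1 S hS).length_le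

theorem colj_pairwise {T : List (List ℕ)} (h : SS T) (k : ℕ) :
    (colj T k).Pairwise (· < ·) := by
  unfold colj
  rw [List.pairwise_filterMap]
  refine h.col.imp ?_
  intro R S hRS b hb b' hb'
  obtain ⟨x, hx, hxb⟩ := hRS k b' hb'
  rw [hb] at hx; cases hx; exact hxb

theorem foldl_column (T : List (List ℕ)) (h : SS T) (k : ℕ) :
    List.foldl rowInsert (tr k T) (colj T k).reverse = tr (k + 1) T := by
  induction T with
  | nil => simp [tr, colj]
  | cons R T ih =>
    by_cases hk : R.length ≤ k
    · have hall : ∀ S ∈ R :: T, S.length ≤ k := by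
        intro S hS
        rcases List.mem_cons.1 hS with rfl | hS
        · exact hk
        · exact (h.length_le S hS).trans hk
      have h1 : colj (R :: T) k = [] := by
        unfold colj
        rw [List.filterMap_eq_nil_iff]
        intro S hS
        simpa using hall S hS
      have h2 : tr k (R :: T) = tr (k + 1) (R :: T) := by
        unfold tr
        congr 1
        apply List.map_congr_left
        intro S hS
        have := hall S hS
        rw [List.take_of_length_le this, List.take_of_length_le (by omega)]
      rw [h1, h2]; rfl
    · push Not at hk
      have h1 : colj (R :: T) k = R[k] :: colj T k := by
        simp [colj, hk]
      have hp := colj_pairwise h k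
      rw [h1] at hp ⊢
      have h2 : List.foldl rowInsert (tr k (R :: T)) (R[k] :: colj T k).reverse =
          List.foldl rowInsert (R.take k :: tr k T) (R[k] :: colj T k).reverse := by
        by_cases hk0 : k = 0
        · subst hk0
          have : ∀ T, tr 0 T = [] := by intro T; simp [tr]
          rw [this, this]
          exact foldl_rowInsert_nil _ (by simp)
        · have hne : R ≠ [] := h.ne R (by simp)
          have : tr k (R :: T) = R.take k :: tr k T := by
            simp [tr, hk0, hne]
          rw [this]
      have h3 : tr (k + 1) (R :: T) = R.take (k + 1) :: tr (k + 1) T := by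
        have hne : R ≠ [] := h.ne R (by simp)
        simp [tr, hne]
      rw [h2, h3, foldl_rowInsert_cons, List.reverse_cons, rinsW_column _ _ _ _ hp,
        ih h.tail, List.take_succ_eq_append_getElem hk]
      intro x hx
      obtain ⟨a, ha, rfl⟩ := List.mem_take_iff_getElem.1 hx
      have hs := h.sorted R (by simp)
      exact List.pairwise_iff_getElem.1 hs a k _ _ (by omega)

theorem tabWord_eq (T : List (List ℕ)) :
    tabWord T = (List.range (T.getD 0 []).length).flatMap fun j => (colj T j).reverse := by
  unfold tabWord tabWordLbl
  rw [List.map_flatMap]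
  congr 1
  funext j
  rw [List.map_filterMap]
  unfold colj
  rw [List.filterMap_reverse]
  congr 1
  have hT : (List.range T.length).map (fun r => T.getD r []) = T := by
    apply List.ext_getElem
    · simp
    · intro a h1 h2
      simp [h2]
  conv_rhs => rw [← hT]
  rw [List.filterMap_map]
  congr 1
  funext r
  simp [Option.map_map, Function.comp_def]

theorem tab_tabWord {T : List (List ℕ)} (h : SS T) : tab (tabWord T) = T := by
  have key : ∀ k, tab ((List.range k).flatMap fun j => (colj T j).reverse) = tr k T := by
    intro k
    induction k with
    | zero => simp [tab, tr]
    | succ k ih =>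
      rw [List.range_succ, List.flatMap_append]
      unfold tab at ih ⊢
      rw [List.foldl_append, ih]
      simpa using foldl_column T h k
  rw [tabWord_eq, key]
  cases T with
  | nil => simp [tr]
  | cons R T =>
    simp only [List.getD_cons_zero]
    unfold tr
    have h1 : (R :: T).map (List.take R.length) = R :: T := by
      conv_rhs => rw [← List.map_id (R :: T)]
      apply List.map_congr_left
      intro S hS
      rcases List.mem_cons.1 hS with rfl | hS
      · simp
      · simpa using h.length_le S hS
    rw [h1, List.filter_eq_self]
    intro S hS
    simpa using h.ne S hS

theorem knuth_tabWord_tab (w : List ℕ) : KnuthEquiv w (tabWord (tab w)) := by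
  have h1 := knuth_rowRead_tab (tabWord (tab w))
  rw [tab_tabWord (tab_SS w)] at h1
  exact (knuth_rowRead_tab w).tr h1.sym

end GCS

namespace GCS

/-- Product of bracket types `)^c (^o`. -/
def bmul (a b : ℕ × ℕ) : ℕ × ℕ := (a.1 + (b.1 - a.2), b.2 + (a.2 - b.1))

/-- Bracket type of a letter. -/
def b1 (cl op x : ℕ) : ℕ × ℕ := if x = cl then (1, 0) else if x = op then (0, 1) else (0, 0)

/-- Numbers of unmatched closing and opening brackets of a word. -/
def bk (cl op : ℕ) : List ℕ → ℕ × ℕ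
  | [] => (0, 0)
  | x :: w => bmul (b1 cl op x) (bk cl op w)

theorem bmul_assoc (a b c : ℕ × ℕ) : bmul (bmul a b) c = bmul a (bmul b c) := by
  unfold bmul; ext <;> simp <;> omega

theorem bk_append (cl op : ℕ) (u v : List ℕ) :
    bk cl op (u ++ v) = bmul (bk cl op u) (bk cl op v) := by
  induction u with
  | nil => simp [bk, bmul]
  | cons x u ih => simp [bk, ih, bmul_assoc]

theorem bk_reverse (cl op : ℕ) (h : cl ≠ op) (u : List ℕ) :
    bk op cl u.reverse = (bk cl op u).swap := by
  induction u with
  | nil => simp [bk]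
  | cons x u ih =>
    rw [List.reverse_cons, bk_append, ih]
    by_cases h1 : x = cl
    · subst h1
      simp [bk, b1, bmul, h]
    · by_cases h2 : x = op
      · subst h2
        simp [bk, b1, bmul, h1]
      · simp [bk, b1, bmul, h1, h2, Prod.swap]

theorem lastUnmatched_none {β : Type} (cl op : ℕ) (L : List (ℕ × β)) (o : ℕ) :
    lastUnmatched cl op L o = none ↔ (bk cl op (L.map Prod.fst)).1 ≤ o := by
  induction L generalizing o with
  | nil => simp [lastUnmatched, bk]
  | cons x L ih =>
    obtain ⟨a, l⟩ := x
    simp only [lastUnmatched, List.map_cons, bk, b1, bmul]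
    split_ifs with h1 h2 h3
    · subst h2
      cases h : lastUnmatched cl op L 0 <;> simp
    · rw [ih]; simp; omega
    · rw [ih]; simp; try omega
    · rw [ih]; simp

theorem lastUnmatched_some {β : Type} (cl op : ℕ) (L : List (ℕ × β)) (o : ℕ) (l : β)
    (h : lastUnmatched cl op L o = some l) :
    ∃ A B, L = A ++ (cl, l) :: B ∧ o ≤ (bk cl op (A.map Prod.fst)).1 ∧
      (bk cl op (A.map Prod.fst)).2 = 0 ∧ (bk cl op (B.map Prod.fst)).1 = 0 := by
  induction L generalizing o with
  | nil => simp [lastUnmatched] at h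
  | cons x L ih =>
    obtain ⟨a, l'⟩ := x
    simp only [lastUnmatched] at h
    split_ifs at h with h1 h2 h3
    · subst h2
      cases hl : lastUnmatched cl op L 0 with
      | none =>
        rw [hl] at h
        simp at h
        subst h h1
        refine ⟨[], L, rfl, by simp, by simp [bk], ?_⟩
        have := (lastUnmatched_none _ _ _ _).1 hl
        omega
      | some z =>
        rw [hl] at h
        simp at h
        subst h
        obtain ⟨A, B, rfl, hA, hA', hB⟩ := ih 0 hl
        refine ⟨(a, l') :: A, B, rfl, by simp, ?_, hB⟩
        simp [bk, b1, bmul, h1, hA']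
    · obtain ⟨A, B, rfl, hA, hA', hB⟩ := ih _ h
      refine ⟨(a, l') :: A, B, rfl, ?_, ?_, hB⟩
      · simp [bk, b1, bmul, h1]; omega
      · simp [bk, b1, bmul, h1, hA']
    · obtain ⟨A, B, rfl, hA, hA', hB⟩ := ih _ h
      refine ⟨(a, l') :: A, B, rfl, ?_, ?_, hB⟩
      · subst h3; simp [bk, b1, bmul, h1]; omega
      · subst h3; simp [bk, b1, bmul, h1, hA']; omega
    · obtain ⟨A, B, rfl, hA, hA', hB⟩ := ih _ h
      refine ⟨(a, l') :: A, B, rfl, ?_, ?_, hB⟩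
      · simp [bk, b1, bmul, h1, h3]; omega
      · simp [bk, b1, bmul, h1, h3, hA']

theorem lastUnmatched_split {β : Type} (cl op : ℕ) (A B : List (ℕ × β)) (l : β) (o : ℕ)
    (hA : o ≤ (bk cl op (A.map Prod.fst)).1)
    (hA' : (bk cl op (A.map Prod.fst)).2 = 0) (hB : (bk cl op (B.map Prod.fst)).1 = 0) :
    lastUnmatched cl op (A ++ (cl, l) :: B) o = some l := by
  induction A generalizing o with
  | nil =>
    simp [bk] at hA
    subst hA
    have := (lastUnmatched_none cl op B 0).2 (by omega)
    simp [lastUnmatched, this]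
  | cons x A ih =>
    obtain ⟨a, l'⟩ := x
    simp only [List.map_cons, bk, bmul, b1] at hA hA'
    simp only [List.cons_append, lastUnmatched]
    split_ifs at hA hA' ⊢ with h1 h2 h3
    · simp at hA hA'
      rw [ih 0 (by simp) hA']
    · exact ih _ (by simp at hA; omega) (by simp at hA'; omega)
    · exact ih _ (by simp at hA; omega) (by simp at hA'; omega)
    · exact ih _ (by simp at hA; omega) (by simp at hA'; omega)

/-- `w'` is `f_i w`. -/
def FW (i : ℕ) (w w' : List ℕ) : Prop :=
  ∃ A B, w = A ++ i :: B ∧ w' = A ++ (i + 1) :: B ∧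
    (bk i (i + 1) A).2 = 0 ∧ (bk i (i + 1) B).1 = 0

/-- Position is determined. -/
theorem FW.unique {i : ℕ} {w w' w'' : List ℕ} (h : FW i w w') (h' : FW i w w'') : w' = w'' := by
  obtain ⟨A, B, rfl, rfl, hA, hB⟩ := h
  obtain ⟨A', B', he, rfl, hA', hB'⟩ := h'
  have key : ∀ (A B C : List ℕ), (bk i (i+1) (C ++ i :: B)).1 = 0 →
      (bk i (i+1) (A ++ i :: C)).2 = 0 → (bk i (i + 1) A).2 = 0 → False := by
    intro A B C h1 h2 h3
    simp only [bk_append, bk, b1, bmul] at h1 h2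
    simp at h1 h2
    omega
  rcases List.append_eq_append_iff.1 he with ⟨C, hC, hC'⟩ | ⟨C, hC, hC'⟩
  · cases C with
    | nil => simp at hC hC'; subst hC hC'; rfl
    | cons c C =>
      simp at hC'
      obtain ⟨rfl, rfl⟩ := hC'
      subst hC
      exact (key A B' C hB hA' hA).elim
  · cases C with
    | nil => simp at hC hC'; subst hC hC'; rfl
    | cons c C =>
      simp at hC'
      obtain ⟨rfl, rfl⟩ := hC'
      subst hC
      exact (key A' B C hB' hA hA').elim

theorem bk_K3 {a b : List ℕ} (h : K3 a b) (i : ℕ) : bk i (i + 1) a = bk i (i + 1) b := by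
  cases h with
  | k1 p q r h1 h2 =>
    simp only [bk, b1, bmul]
    split_ifs <;> first | rfl | omega
  | k2 p q r h1 h2 =>
    simp only [bk, b1, bmul]
    split_ifs <;> first | rfl | omega

theorem bk_knuth {w w' : List ℕ} (h : KnuthEquiv w w') (i : ℕ) :
    bk i (i + 1) w = bk i (i + 1) w' := by
  induction h with
  | rel x y h =>
    obtain ⟨u, a, b, v, hk, rfl, rfl⟩ := (knuthStep_iff _ _).1 h
    simp only [bk_append, bk_K3 hk]
  | refl x => rfl
  | symm x y _ ih => exact ih.symm
  | trans x y z _ _ h1 h2 => exact h1.trans h2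

theorem bk_cons_cl (i : ℕ) (w : List ℕ) : bk i (i+1) (i :: w) = ((bk i (i+1) w).1 + 1, (bk i (i+1) w).2) := by
  simp [bk, b1, bmul]; omega

theorem bk_cons_op (i : ℕ) (w : List ℕ) : bk i (i+1) ((i+1) :: w) =
    ((bk i (i+1) w).1 - 1, (bk i (i+1) w).2 + (1 - (bk i (i+1) w).1)) := by
  simp [bk, b1, bmul]

theorem bk_cons_ne (i x : ℕ) (w : List ℕ) (h : x ≠ i) (h' : x ≠ i + 1) :
    bk i (i+1) (x :: w) = bk i (i+1) w := by
  simp [bk, b1, bmul, h, h']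


theorem b1_eq (i x : ℕ) :
    b1 i (i + 1) x = (if x = i then 1 else 0, if x = i + 1 then 1 else 0) := by
  unfold b1
  split_ifs <;> first | rfl | omega

theorem bk_one (i x : ℕ) : bk i (i + 1) [x] =
    (if x = i then 1 else 0, if x = i + 1 then 1 else 0) := by
  simp [bk, b1_eq, bmul]

theorem bk_two (i x y : ℕ) : bk i (i + 1) [x, y] =
    bmul (if x = i then 1 else 0, if x = i + 1 then 1 else 0)
      (if y = i then 1 else 0, if y = i + 1 then 1 else 0) := by
  simp [bk, b1_eq, bmul]

/-- Local form of the compatibility of Knuth relations with `f_i`. -/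
def Loc (i : ℕ) (a1 a2 : List ℕ) (b : List ℕ) : Prop :=
  ∀ ou cv : ℕ, (bk i (i + 1) a1).2 = 0 → ou ≤ (bk i (i + 1) a1).1 →
    (bk i (i + 1) a2).1 = 0 → cv ≤ (bk i (i + 1) a2).2 →
    ∃ b1 b2, b = b1 ++ i :: b2 ∧ (bk i (i + 1) b1).2 = 0 ∧ ou ≤ (bk i (i + 1) b1).1 ∧
      (bk i (i + 1) b2).1 = 0 ∧ cv ≤ (bk i (i + 1) b2).2 ∧
      (K3 (a1 ++ (i + 1) :: a2) (b1 ++ (i + 1) :: b2) ∨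
        K3 (b1 ++ (i + 1) :: b2) (a1 ++ (i + 1) :: a2))

theorem split_three {x y z i : ℕ} {a1 a2 : List ℕ} (ha : [x, y, z] = a1 ++ i :: a2) :
    (x = i ∧ a1 = [] ∧ a2 = [y, z]) ∨ (y = i ∧ a1 = [x] ∧ a2 = [z]) ∨
      (z = i ∧ a1 = [x, y] ∧ a2 = []) := by
  rcases a1 with _ | ⟨s, _ | ⟨t, _ | ⟨u, a1⟩⟩⟩ <;> simp at ha ⊢ <;> grind

theorem loc1 {p q r i : ℕ} (h1 : p ≤ q) (h2 : q < r) {a1 a2 : List ℕ}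
    (ha : [p, r, q] = a1 ++ i :: a2) : Loc i a1 a2 [r, p, q] := by
  rcases split_three ha with ⟨rfl, rfl, rfl⟩ | ⟨rfl, rfl, rfl⟩ | ⟨rfl, rfl, rfl⟩ <;>
    intro ou cv c1 c2 c3 c4 <;> simp only [bk, b1_eq, bmul] at c1 c2 c3 c4
  · by_cases hq : q = p
    · subst hq
      have hr : r = q + 1 := by
        by_contra hr
        (try split_ifs at *) <;> omega
      subst hr
      refine ⟨[q + 1, q], [], rfl, ?_, ?_, ?_, ?_, Or.inr (K3.k2 _ _ _ (by omega) (by omega))⟩ <;>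
        simp only [bk, b1_eq, bmul] <;> (try split_ifs at *) <;> omega
    · refine ⟨[r], [q], rfl, ?_, ?_, ?_, ?_, Or.inl (K3.k1 _ _ _ (by omega) (by omega))⟩ <;>
        simp only [bk, b1_eq, bmul] <;> (try split_ifs at *) <;> omega
  · refine ⟨[], [p, q], rfl, ?_, ?_, ?_, ?_, Or.inl (K3.k1 _ _ _ (by omega) (by omega))⟩ <;>
        simp only [bk, b1_eq, bmul] <;> (try split_ifs at *) <;> omega
  · have hr : r ≠ q + 1 := by
      intro hr
      (try split_ifs at *) <;> omega
    refine ⟨[r, p], [], rfl, ?_, ?_, ?_, ?_, Or.inl (K3.k1 _ _ _ (by omega) (by omega))⟩ <;>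
        simp only [bk, b1_eq, bmul] <;> (try split_ifs at *) <;> omega

theorem loc2 {p q r i : ℕ} (h1 : p ≤ q) (h2 : q < r) {a1 a2 : List ℕ}
    (ha : [r, p, q] = a1 ++ i :: a2) : Loc i a1 a2 [p, r, q] := by
  rcases split_three ha with ⟨rfl, rfl, rfl⟩ | ⟨rfl, rfl, rfl⟩ | ⟨rfl, rfl, rfl⟩ <;>
    intro ou cv c1 c2 c3 c4 <;> simp only [bk, b1_eq, bmul] at c1 c2 c3 c4
  · refine ⟨[p], [q], rfl, ?_, ?_, ?_, ?_, Or.inr (K3.k1 _ _ _ (by omega) (by omega))⟩ <;>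
        simp only [bk, b1_eq, bmul] <;> (try split_ifs at *) <;> omega
  · have hr : q ≠ p := by
      intro hr
      (try split_ifs at *) <;> omega
    refine ⟨[], [r, q], rfl, ?_, ?_, ?_, ?_, Or.inr (K3.k1 _ _ _ (by omega) (by omega))⟩ <;>
        simp only [bk, b1_eq, bmul] <;> (try split_ifs at *) <;> omega
  · by_cases hr : r = q + 1
    · have hp : p = q := by
        by_contra hp
        (try split_ifs at *) <;> omega
      subst hr hp
      refine ⟨[], [p + 1, p], rfl, ?_, ?_, ?_, ?_, Or.inl (K3.k2 _ _ _ (by omega) (by omega))⟩ <;>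
        simp only [bk, b1_eq, bmul] <;> (try split_ifs at *) <;> omega
    · refine ⟨[p, r], [], rfl, ?_, ?_, ?_, ?_, Or.inr (K3.k1 _ _ _ (by omega) (by omega))⟩ <;>
        simp only [bk, b1_eq, bmul] <;> (try split_ifs at *) <;> omega

theorem loc3 {p q r i : ℕ} (h1 : p < q) (h2 : q ≤ r) {a1 a2 : List ℕ}
    (ha : [q, p, r] = a1 ++ i :: a2) : Loc i a1 a2 [q, r, p] := by
  rcases split_three ha with ⟨rfl, rfl, rfl⟩ | ⟨rfl, rfl, rfl⟩ | ⟨rfl, rfl, rfl⟩ <;>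
    intro ou cv c1 c2 c3 c4 <;> simp only [bk, b1_eq, bmul] at c1 c2 c3 c4
  · have hr : r ≠ q := by
      intro hr
      (try split_ifs at *) <;> omega
    refine ⟨[], [r, p], rfl, ?_, ?_, ?_, ?_, Or.inl (K3.k2 _ _ _ (by omega) (by omega))⟩ <;>
        simp only [bk, b1_eq, bmul] <;> (try split_ifs at *) <;> omega
  · have hr : q ≠ p + 1 := by
      intro hr
      (try split_ifs at *) <;> omega
    refine ⟨[q, r], [], rfl, ?_, ?_, ?_, ?_, Or.inl (K3.k2 _ _ _ (by omega) (by omega))⟩ <;>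
        simp only [bk, b1_eq, bmul] <;> (try split_ifs at *) <;> omega
  · refine ⟨[q], [p], rfl, ?_, ?_, ?_, ?_, Or.inl (K3.k2 _ _ _ (by omega) (by omega))⟩ <;>
        simp only [bk, b1_eq, bmul] <;> (try split_ifs at *) <;> omega

theorem loc4 {p q r i : ℕ} (h1 : p < q) (h2 : q ≤ r) {a1 a2 : List ℕ}
    (ha : [q, r, p] = a1 ++ i :: a2) : Loc i a1 a2 [q, p, r] := by
  rcases split_three ha with ⟨rfl, rfl, rfl⟩ | ⟨rfl, rfl, rfl⟩ | ⟨rfl, rfl, rfl⟩ <;>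
    intro ou cv c1 c2 c3 c4 <;> simp only [bk, b1_eq, bmul] at c1 c2 c3 c4
  · have hr : r ≠ q := by
      intro hr
      (try split_ifs at *) <;> omega
    refine ⟨[], [p, r], rfl, ?_, ?_, ?_, ?_, Or.inr (K3.k2 _ _ _ (by omega) (by omega))⟩ <;>
        simp only [bk, b1_eq, bmul] <;> (try split_ifs at *) <;> omega
  · refine ⟨[q, p], [], rfl, ?_, ?_, ?_, ?_, Or.inr (K3.k2 _ _ _ (by omega) (by omega))⟩ <;>
        simp only [bk, b1_eq, bmul] <;> (try split_ifs at *) <;> omega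
  · have hr : q ≠ p + 1 := by
      intro hr
      (try split_ifs at *) <;> omega
    refine ⟨[q], [r], rfl, ?_, ?_, ?_, ?_, Or.inr (K3.k2 _ _ _ (by omega) (by omega))⟩ <;>
        simp only [bk, b1_eq, bmul] <;> (try split_ifs at *) <;> omega

theorem K3_local {a b : List ℕ} (h : K3 a b ∨ K3 b a) (i : ℕ) (a1 a2 : List ℕ)
    (ha : a = a1 ++ i :: a2) : Loc i a1 a2 b := by
  rcases h with h | h <;> cases h with
  | k1 p q r h1 h2 => first | exact loc1 h1 h2 ha | exact loc2 h1 h2 ha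
  | k2 p q r h1 h2 => first | exact loc3 h1 h2 ha | exact loc4 h1 h2 ha

theorem FW_step {a b : List ℕ} (h : K3 a b ∨ K3 b a) (i : ℕ) (u v w' : List ℕ)
    (hF : FW i (u ++ (a ++ v)) w') : ∃ z, FW i (u ++ (b ++ v)) z ∧ KnuthEquiv w' z := by
  obtain ⟨A, B, he, rfl, hA, hB⟩ := hF
  have hbk : bk i (i + 1) a = bk i (i + 1) b := by
    rcases h with h | h
    · exact bk_K3 h i
    · exact (bk_K3 h i).symm
  have hK : ∀ {a b : List ℕ} (_ : K3 a b ∨ K3 b a) (s t : List ℕ),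
      KnuthEquiv (s ++ (a ++ t)) (s ++ (b ++ t)) := by
    intro a b h s t
    rcases h with h | h
    · exact KnuthEquiv.of_K3 h s t
    · exact (KnuthEquiv.of_K3 h s t).sym
  -- the changed letter in `u`
  have inU : ∀ u2, u = A ++ i :: u2 → B = u2 ++ (a ++ v) →
      ∃ z, FW i (u ++ (b ++ v)) z ∧ KnuthEquiv (A ++ (i + 1) :: B) z := by
    rintro u2 rfl rfl
    refine ⟨A ++ (i + 1) :: (u2 ++ (b ++ v)), ⟨A, u2 ++ (b ++ v), by simp, rfl, hA, ?_⟩, ?_⟩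
    · simpa only [bk_append, hbk] using hB
    · simpa using hK h (A ++ (i + 1) :: u2) v
  have inV : ∀ v1, v = v1 ++ i :: B → A = u ++ (a ++ v1) →
      ∃ z, FW i (u ++ (b ++ v)) z ∧ KnuthEquiv (A ++ (i + 1) :: B) z := by
    rintro v1 rfl rfl
    refine ⟨u ++ (b ++ v1) ++ (i + 1) :: B, ⟨u ++ (b ++ v1), B, by simp, rfl, ?_, hB⟩, ?_⟩
    · simpa only [bk_append, hbk] using hA
    · simpa using hK h u (v1 ++ (i + 1) :: B)
  have inA : ∀ a1 a2, a = a1 ++ i :: a2 → A = u ++ a1 → B = a2 ++ v →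
      ∃ z, FW i (u ++ (b ++ v)) z ∧ KnuthEquiv (A ++ (i + 1) :: B) z := by
    rintro a1 a2 ha rfl rfl
    rw [bk_append] at hA hB
    simp only [bmul] at hA hB
    obtain ⟨c1, c2, rfl, d1, d2, d3, d4, d5⟩ := K3_local h i a1 a2 ha (bk i (i + 1) u).2
      (bk i (i + 1) v).1 (by omega) (by omega) (by omega) (by omega)
    refine ⟨u ++ ((c1 ++ (i + 1) :: c2) ++ v), ⟨u ++ c1, c2 ++ v, by simp, by simp, ?_, ?_⟩, ?_⟩
    · rw [bk_append]; simp only [bmul]; omega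
    · rw [bk_append]; simp only [bmul]; omega
    · simpa using hK d5 u v
  rcases List.append_eq_append_iff.1 he with ⟨C, hC, hC'⟩ | ⟨C, hC, hC'⟩
  · -- A = u ++ C, a ++ v = C ++ i :: B
    rcases List.append_eq_append_iff.1 hC' with ⟨D, hD, hD'⟩ | ⟨D, hD, hD'⟩
    · exact inV D hD' (by rw [hC, hD])
    · cases D with
      | nil => exact inV [] (by simpa using hD'.symm) (by rw [hC, hD]; simp)
      | cons d D =>
        simp at hD'
        obtain ⟨rfl, rfl⟩ := hD'
        exact inA C D hD hC rfl
  · -- u = A ++ C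
    cases C with
    | nil =>
      simp at hC hC'
      subst hC
      rcases a with _ | ⟨x, a⟩
      · rcases h with h | h <;> cases h
      · simp at hC'
        exact inA [] a (by simp [hC'.1]) (by simp) hC'.2
    | cons d C =>
      simp at hC'
      obtain ⟨rfl, rfl⟩ := hC'
      exact inU C hC rfl

theorem FW_knuth {w x : List ℕ} (h : KnuthEquiv w x) (i : ℕ) :
    (∀ w', FW i w w' → ∃ x', FW i x x' ∧ KnuthEquiv w' x') ∧
    (∀ x', FW i x x' → ∃ w', FW i w w' ∧ KnuthEquiv x' w') := by
  induction h with
  | rel x y h =>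
    obtain ⟨u, a, b, v, hk, rfl, rfl⟩ := (knuthStep_iff _ _).1 h
    exact ⟨fun w' => FW_step (Or.inl hk) i u v w', fun w' => FW_step (Or.inr hk) i u v w'⟩
  | refl x => exact ⟨fun w' h => ⟨w', h, KnuthEquiv.rfl' _⟩, fun w' h => ⟨w', h, KnuthEquiv.rfl' _⟩⟩
  | symm x y _ ih => exact ⟨ih.2, ih.1⟩
  | trans x y z _ _ h1 h2 =>
    constructor
    · intro w' hw
      obtain ⟨y', hy, e1⟩ := h1.1 w' hw
      obtain ⟨z', hz, e2⟩ := h2.1 y' hy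
      exact ⟨z', hz, e1.tr e2⟩
    · intro w' hw
      obtain ⟨y', hy, e1⟩ := h2.2 w' hw
      obtain ⟨z', hz, e2⟩ := h1.2 y' hy
      exact ⟨z', hz, e1.tr e2⟩

theorem FW_knuth_eq {w x w' x' : List ℕ} (h : KnuthEquiv w x) {i : ℕ} (hw : FW i w w')
    (hx : FW i x x') : KnuthEquiv w' x' := by
  obtain ⟨y, hy, e⟩ := (FW_knuth h i).1 w' hw
  rwa [hx.unique hy]

end GCS

namespace GCS

/-- Entry of a tableau in a box, if the box exists. -/
def ent (T : List (List ℕ)) (r j : ℕ) : Option ℕ := (T.getD r [])[j]?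

theorem ent_some_lt {T : List (List ℕ)} {r j x : ℕ} (h : ent T r j = some x) :
    ∃ hr : r < T.length, ∃ hj : j < T[r].length, T[r][j] = x := by
  unfold ent at h
  by_cases hr : r < T.length
  · rw [List.getD_eq_getElem _ _ hr] at h
    obtain ⟨hj, hx⟩ := List.getElem?_eq_some_iff.1 h
    exact ⟨hr, hj, hx⟩
  · rw [List.getD_eq_default _ _ (by omega)] at h
    simp at h

theorem ent_eq_some {T : List (List ℕ)} {r j : ℕ} (hr : r < T.length) (hj : j < T[r].length) :
    ent T r j = some T[r][j] := by
  unfold ent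
  rw [List.getD_eq_getElem _ _ hr, List.getElem?_eq_getElem hj]

theorem SS.row {T : List (List ℕ)} (h : SS T) {r j k y : ℕ} (hjk : j ≤ k)
    (hk : ent T r k = some y) : ∃ x, ent T r j = some x ∧ x ≤ y := by
  obtain ⟨hr, hj, rfl⟩ := ent_some_lt hk
  refine ⟨T[r][j], ent_eq_some hr (by omega), ?_⟩
  rcases Nat.eq_or_lt_of_le hjk with rfl | hlt
  · exact le_rfl
  · exact List.pairwise_iff_getElem.1 (h.sorted T[r] (List.getElem_mem hr)) j k (by omega) hj hlt

theorem SS.colm {T : List (List ℕ)} (h : SS T) {r s j y : ℕ} (hrs : r < s)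
    (hk : ent T s j = some y) : ∃ x, ent T r j = some x ∧ x < y := by
  obtain ⟨hs, hj, rfl⟩ := ent_some_lt hk
  have := List.pairwise_iff_getElem.1 h.col r s (by omega) hs hrs j _ (List.getElem?_eq_getElem hj)
  unfold ent
  rwa [List.getD_eq_getElem _ _ (by omega : r < T.length)]

theorem SS_of_ent {T : List (List ℕ)} (h0 : ∀ r, r < T.length → ∃ x, ent T r 0 = some x)
    (hrow : ∀ r j k x y, j < k → ent T r j = some x → ent T r k = some y → x ≤ y)
    (hcol : ∀ r s j y, r < s → ent T s j = some y → ∃ x, ent T r j = some x ∧ x < y) : SS T := by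
  refine ⟨?_, ?_, ?_⟩
  · intro R hR
    obtain ⟨r, hr, rfl⟩ := List.getElem_of_mem hR
    obtain ⟨x, hx⟩ := h0 r hr
    obtain ⟨_, hj, _⟩ := ent_some_lt hx
    intro h
    simp [h] at hj
  · intro R hR
    obtain ⟨r, hr, rfl⟩ := List.getElem_of_mem hR
    rw [List.pairwise_iff_getElem]
    intro j k hj hk hjk
    exact hrow r j k _ _ hjk (ent_eq_some hr hj) (ent_eq_some hr hk)
  · rw [List.pairwise_iff_getElem]
    intro r s hr hs hrs j y hy
    have : ent T s j = some y := by
      unfold ent; rwa [List.getD_eq_getElem _ _ hs]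
    have := hcol r s j y hrs this
    unfold ent at this
    rwa [List.getD_eq_getElem _ _ hr] at this

/-- Reading order on boxes. -/
def LtB (p q : ℕ × ℕ) : Prop := p.2 < q.2 ∨ (p.2 = q.2 ∧ q.1 < p.1)

theorem tabWordLbl_pairwise (T : List (List ℕ)) :
    (tabWordLbl T).Pairwise (fun a b => LtB a.2 b.2) := by
  unfold tabWordLbl
  rw [List.pairwise_flatMap]
  refine ⟨?_, ?_⟩
  · intro j _
    rw [List.pairwise_filterMap, List.pairwise_reverse]
    refine List.pairwise_lt_range.imp ?_
    intro a b hab x hx y hy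
    simp only [Option.map_eq_some_iff] at hx hy
    obtain ⟨_, _, rfl⟩ := hx
    obtain ⟨_, _, rfl⟩ := hy
    exact Or.inr ⟨rfl, hab⟩
  · refine List.pairwise_lt_range.imp ?_
    intro a b hab x hx y hy
    simp only [List.mem_filterMap, Option.map_eq_some_iff] at hx hy
    obtain ⟨_, _, _, _, rfl⟩ := hx
    obtain ⟨_, _, _, _, rfl⟩ := hy
    exact Or.inl hab

theorem mem_tabWordLbl {T : List (List ℕ)} (h : SS T) (x r j : ℕ) :
    (x, (r, j)) ∈ tabWordLbl T ↔ ent T r j = some x := by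
  unfold tabWordLbl
  simp only [List.mem_flatMap, List.mem_range, List.mem_filterMap, List.mem_reverse,
    Option.map_eq_some_iff, Prod.mk.injEq]
  constructor
  · rintro ⟨_, _, _, _, _, he, rfl, rfl, rfl⟩
    exact he
  · intro he
    obtain ⟨hr, hj, hx⟩ := ent_some_lt he
    refine ⟨j, ?_, r, hr, x, he, rfl, rfl, rfl⟩
    have : ∃ y, ent T 0 j = some y := by
      rcases Nat.eq_zero_or_pos r with rfl | hp
      · exact ⟨x, he⟩
      · obtain ⟨y, hy, _⟩ := h.colm hp he
        exact ⟨y, hy⟩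
    obtain ⟨y, hy⟩ := this
    obtain ⟨h0, hj0, _⟩ := ent_some_lt hy
    rwa [List.getD_eq_getElem _ _ h0]

theorem setBox_length (T : List (List ℕ)) (r j v : ℕ) : (setBox T r j v).length = T.length := by
  simp [setBox]

theorem ent_setBox {T : List (List ℕ)} {r j x : ℕ} (h : ent T r j = some x) (v s l : ℕ) :
    ent (setBox T r j v) s l = if s = r ∧ l = j then some v else ent T s l := by
  obtain ⟨hr, hj, hx⟩ := ent_some_lt h
  unfold ent setBox
  rw [List.getD_eq_getElem _ _ hr]
  by_cases hs : s = r
  · subst hs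
    rw [List.getD_eq_getElem _ _ (by simpa using hr)]
    simp only [List.getElem_set_self]
    by_cases hl : l = j
    · subst hl; simp [hj]
    · rw [List.getElem?_set_ne (by omega)]
      simp [hl, List.getElem?_eq_getElem hr]
  · rw [if_neg (by tauto)]
    simp only [List.getD_eq_getElem?_getD]
    rw [List.getElem?_set_ne (by omega)]

theorem setBox_row0 (T : List (List ℕ)) (r j v : ℕ) :
    ((setBox T r j v).getD 0 []).length = (T.getD 0 []).length := by
  unfold setBox
  cases T with
  | nil => simp
  | cons R T => cases r <;> simp

theorem tabWordLbl_setBox {T : List (List ℕ)} {p : ℕ × ℕ} {x : ℕ} (h : ent T p.1 p.2 = some x)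
    (v : ℕ) : tabWordLbl (setBox T p.1 p.2 v) =
      (tabWordLbl T).map (fun a => if a.2 = p then (v, a.2) else a) := by
  unfold tabWordLbl
  rw [setBox_length, setBox_row0, List.map_flatMap]
  congr 1
  funext j
  rw [List.map_filterMap]
  congr 1
  funext r
  have := ent_setBox h v r j
  unfold ent at this
  rw [this]
  unfold ent at h
  by_cases hp : r = p.1 ∧ j = p.2
  · obtain ⟨rfl, rfl⟩ := hp
    simp only [and_self, if_true, h]
    simp
  · rw [if_neg hp]
    cases hh : (T.getD r [])[j]? with
    | none => simp
    | some y =>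
      have : ¬ ((r, j) = p) := by rintro rfl; exact hp ⟨rfl, rfl⟩
      simp [this]

theorem tabWordLbl_setBox_split {T : List (List ℕ)} {p : ℕ × ℕ} {i : ℕ} (hT : SS T)
    {A B : List (ℕ × (ℕ × ℕ))} (h : tabWordLbl T = A ++ (i, p) :: B) (v : ℕ) :
    tabWordLbl (setBox T p.1 p.2 v) = A ++ (v, p) :: B := by
  have hm : ent T p.1 p.2 = some i := (mem_tabWordLbl hT i p.1 p.2).1 (by rw [h]; simp)
  rw [tabWordLbl_setBox hm, h]
  have hp := tabWordLbl_pairwise T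
  rw [h, List.pairwise_append, List.pairwise_cons] at hp
  obtain ⟨_, ⟨hB, _⟩, hA⟩ := hp
  have irr : ∀ q, ¬ LtB q q := by intro q hq; unfold LtB at hq; omega
  rw [List.map_append, List.map_cons]
  congr 1
  · conv_rhs => rw [← List.map_id A]
    apply List.map_congr_left
    intro a ha
    rw [if_neg, id]
    rintro rfl
    exact irr _ (hA a ha (i, a.2) (by simp))
  · simp only [if_true]
    congr 1
    conv_rhs => rw [← List.map_id B]
    apply List.map_congr_left
    intro a ha
    rw [if_neg, id]
    rintro rfl
    exact irr _ (hB a ha)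

/-- `S` is obtained from `T` by the lowering operator. -/
def FT (i : ℕ) (T S : List (List ℕ)) : Prop :=
  ∃ A B p, tabWordLbl T = A ++ (i, p) :: B ∧ S = setBox T p.1 p.2 (i + 1) ∧
    (bk i (i + 1) (A.map Prod.fst)).2 = 0 ∧ (bk i (i + 1) (B.map Prod.fst)).1 = 0

theorem fTab_some {i : ℕ} {T S : List (List ℕ)} (h : fTab i T = some S) : FT i T S := by
  unfold fTab at h
  rw [Option.map_eq_some_iff] at h
  obtain ⟨p, hp, rfl⟩ := h
  obtain ⟨A, B, h1, _, h3, h4⟩ := lastUnmatched_some _ _ _ _ _ hp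
  exact ⟨A, B, p, h1, rfl, h3, h4⟩

theorem fTab_none (i : ℕ) (T : List (List ℕ)) :
    fTab i T = none ↔ (bk i (i + 1) (tabWord T)).1 = 0 := by
  unfold fTab tabWord
  rw [Option.map_eq_none_iff, lastUnmatched_none, Nat.le_zero]

theorem eTab_none (i : ℕ) (T : List (List ℕ)) :
    eTab i T = none ↔ (bk i (i + 1) (tabWord T)).2 = 0 := by
  unfold eTab tabWord
  rw [Option.map_eq_none_iff, lastUnmatched_none, List.map_reverse, bk_reverse _ _ (by omega),
    Nat.le_zero]
  rfl

theorem FT.fw {i : ℕ} {T S : List (List ℕ)} (hT : SS T) (h : FT i T S) :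
    FW i (tabWord T) (tabWord S) := by
  obtain ⟨A, B, p, h1, rfl, h3, h4⟩ := h
  refine ⟨A.map Prod.fst, B.map Prod.fst, ?_, ?_, h3, h4⟩
  · unfold tabWord; rw [h1]; simp
  · unfold tabWord; rw [tabWordLbl_setBox_split hT h1]; simp

theorem FT.eTab {i : ℕ} {T S : List (List ℕ)} (hT : SS T) (h : FT i T S) :
    eTab i S = some T := by
  obtain ⟨A, B, p, h1, rfl, h3, h4⟩ := h
  unfold GCS.eTab
  rw [tabWordLbl_setBox_split hT h1]
  have : (A ++ (i + 1, p) :: B).reverse = B.reverse ++ (i + 1, p) :: A.reverse := by simp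
  rw [this, lastUnmatched_split]
  · have hm : ent T p.1 p.2 = some i := (mem_tabWordLbl hT i p.1 p.2).1 (by rw [h1]; simp)
    obtain ⟨hr, hj, hx⟩ := ent_some_lt hm
    simp only [Option.map_some, setBox, Option.some.injEq]
    rw [List.getD_eq_getElem _ _ hr, List.getD_eq_getElem _ _ (by simpa using hr)]
    simp [← hx]
  · omega
  · rw [List.map_reverse, bk_reverse _ _ (by omega)]; exact h4
  · rw [List.map_reverse, bk_reverse _ _ (by omega)]; exact h3

theorem bk_no_cl (i : ℕ) (w : List ℕ) (h : i ∉ w) : (bk i (i + 1) w).1 = 0 := by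
  induction w with
  | nil => rfl
  | cons x w ih =>
    simp at h
    have := ih h.2
    simp only [bk, b1_eq, bmul]
    split_ifs <;> omega

theorem bk_no_op (i : ℕ) (w : List ℕ) (h : i + 1 ∉ w) : (bk i (i + 1) w).2 = 0 := by
  induction w with
  | nil => rfl
  | cons x w ih =>
    simp at h
    have := ih h.2
    simp only [bk, b1_eq, bmul]
    split_ifs <;> omega

theorem FT.ss {i : ℕ} {T S : List (List ℕ)} (hT : SS T) (h : FT i T S) : SS S := by
  obtain ⟨A, B, ⟨r, j⟩, h1, rfl, h3, h4⟩ := h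
  have hm : ent T r j = some i := (mem_tabWordLbl hT i r j).1 (by rw [h1]; simp)
  have hp := tabWordLbl_pairwise T
  have key1 : ∀ s, r < s → ent T s j ≠ some (i + 1) := by
    intro s hs he
    have hmem := (mem_tabWordLbl hT _ _ _).2 he
    have hp1 := hp
    rw [h1, List.pairwise_append, List.pairwise_cons] at hp1
    obtain ⟨_, ⟨hB, _⟩, hA⟩ := hp1
    have hA' : (i + 1, (s, j)) ∈ A := by
      rw [h1] at hmem
      simp at hmem
      rcases hmem with hmem | hmem
      · exact hmem
      · have := hB _ hmem
        simp [LtB] at this; omega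
    obtain ⟨A1, A2, rfl⟩ := List.append_of_mem hA'
    have hno : i ∉ A2.map Prod.fst := by
      intro hi
      simp at hi
      obtain ⟨t, l, hi⟩ := hi
      have e := (mem_tabWordLbl hT i t l).1 (by rw [h1]; simp [hi])
      have l1 := hA _ (by simp [hi] : (i, (t, l)) ∈ A1 ++ (i + 1, (s, j)) :: A2)
        (i, (r, j)) (by simp)
      rw [h1] at hp
      simp only [List.append_assoc, List.cons_append, List.pairwise_append,
        List.pairwise_cons] at hp
      have l2 := hp.2.1.1 (i, (t, l)) (by simp [hi])
      simp [LtB] at l1 l2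
      obtain ⟨rfl, h5⟩ : l = j ∧ r < t := by omega
      obtain ⟨x, hx, hlt⟩ := hT.colm h5 e
      rw [hm] at hx
      simp at hx; omega
    have := bk_no_cl i _ hno
    simp [bk_append, bk_cons_op, bmul] at h3
    omega
  have key2 : ∀ k, j < k → ent T r k ≠ some i := by
    intro k hk he
    have hmem := (mem_tabWordLbl hT _ _ _).2 he
    have hp1 := hp
    rw [h1, List.pairwise_append, List.pairwise_cons] at hp1
    obtain ⟨_, ⟨hB, hBB⟩, hA⟩ := hp1
    have hB' : (i, (r, k)) ∈ B := by
      rw [h1] at hmem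
      simp at hmem
      rcases hmem with hmem | hmem | hmem
      · have := hA _ hmem (i, (r, j)) (by simp)
        simp [LtB] at this; omega
      · omega
      · exact hmem
    obtain ⟨B1, B2, rfl⟩ := List.append_of_mem hB'
    have hex : i + 1 ∈ B1.map Prod.fst := by
      by_contra hno
      have := bk_no_op i _ hno
      simp [bk_append, bk_cons_cl, bmul] at h4
      omega
    simp at hex
    obtain ⟨s, l, hi⟩ := hex
    have e := (mem_tabWordLbl hT (i + 1) s l).1 (by rw [h1]; simp [hi])
    have l1 := hB (i + 1, (s, l)) (by simp [hi])
    have l2 := (List.pairwise_append.1 hBB).2.2 _ hi (i, (r, k)) (by simp)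
    simp [LtB] at l1 l2
    by_cases hlj : l = j
    · subst hlj
      have hsr : s < r := by omega
      obtain ⟨x, hx, hlt⟩ := hT.colm hsr hm
      rw [e] at hx
      simp at hx; omega
    · by_cases hsr : s ≤ r
      · obtain ⟨y, hy, hyi⟩ := hT.row (by omega : l ≤ k) he
        rcases Nat.eq_or_lt_of_le hsr with rfl | hlt
        · rw [e] at hy; simp at hy; omega
        · obtain ⟨x, hx, hlt⟩ := hT.colm hlt hy
          rw [e] at hx
          simp at hx; omega
      · obtain ⟨y, hy, hyi⟩ := hT.row (by omega : j ≤ l) e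
        obtain ⟨x, hx, hlt⟩ := hT.colm (by omega : r < s) hy
        rw [hm] at hx
        simp at hx
        exact key1 s (by omega) (by rw [hy]; congr 1; omega)
  have hE := ent_setBox hm (i + 1)
  simp only
  apply SS_of_ent
  · intro s hs
    rw [setBox_length] at hs
    rw [hE]
    split_ifs
    · exact ⟨_, rfl⟩
    · have := hT.ne T[s] (List.getElem_mem hs)
      exact ⟨_, ent_eq_some hs (List.length_pos_iff.2 this)⟩
  · intro s a b x y hab hx hy
    rw [hE] at hx hy
    split_ifs at hx hy with c1 c2 c2
    · omega
    · obtain ⟨rfl, rfl⟩ := c1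
      simp at hx
      obtain ⟨z, hz, hzy⟩ := hT.row hab.le hy
      rw [hm] at hz
      simp at hz
      have := key2 b hab
      rw [hy] at this
      simp at this
      omega
    · obtain ⟨rfl, rfl⟩ := c2
      simp at hy
      obtain ⟨z, hz, hzy⟩ := hT.row hab.le hm
      rw [hx] at hz
      simp at hz
      omega
    · obtain ⟨z, hz, hzy⟩ := hT.row hab.le hy
      rw [hx] at hz
      simp at hz
      omega
  · intro s t a y hst hy
    rw [hE] at hy
    rw [hE]
    split_ifs at hy with c1
    · obtain ⟨rfl, rfl⟩ := c1
      simp at hy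
      obtain ⟨z, hz, hzy⟩ := hT.colm hst hm
      rw [if_neg (by omega)]
      exact ⟨z, hz, by omega⟩
    · obtain ⟨z, hz, hzy⟩ := hT.colm hst hy
      split_ifs with c2
      · obtain ⟨rfl, rfl⟩ := c2
        rw [hm] at hz
        simp at hz
        have := key1 t hst
        rw [hy] at this
        simp at this
        exact ⟨_, rfl, by omega⟩
      · exact ⟨z, hz, hzy⟩

end GCS

namespace GCS

/-- Reading order on labelled letters. -/
def LeL {n : ℕ} (a b : ℕ × Fin n) : Prop := a.2 < b.2 ∨ (a.2 = b.2 ∧ a.1 ≤ b.1)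

theorem rowWordLbl_pairwise {m n : ℕ} (M : Matrix (Fin m) (Fin n) ℕ) :
    (rowWordLbl M).Pairwise LeL := by
  unfold rowWordLbl
  rw [List.pairwise_flatMap]
  refine ⟨?_, ?_⟩
  · intro c _
    rw [List.pairwise_flatMap]
    refine ⟨?_, ?_⟩
    · intro r _
      rw [List.pairwise_replicate]
      exact Or.inr (Or.inr ⟨rfl, le_rfl⟩)
    · refine (List.pairwise_lt_finRange m).imp ?_
      intro a b hab x hx y hy
      rw [List.mem_replicate] at hx hy
      rw [hx.2, hy.2]
      refine Or.inr ⟨rfl, ?_⟩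
      have : a.1 < b.1 := hab
      simp only; omega
  · refine (List.pairwise_lt_finRange n).imp ?_
    intro a b hab x hx y hy
    simp only [List.mem_flatMap, List.mem_replicate] at hx hy
    obtain ⟨_, _, _, rfl⟩ := hx
    obtain ⟨_, _, _, rfl⟩ := hy
    exact Or.inl hab

theorem count_rowWordLbl {m n : ℕ} (M : Matrix (Fin m) (Fin n) ℕ) (x : ℕ) (c : Fin n) :
    (rowWordLbl M).count (x, c) = entRow M x c := by
  unfold rowWordLbl
  rw [List.count_flatMap, ← Fin.sum_univ_def]
  simp only [Function.comp_def, List.count_flatMap]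
  simp only [← Fin.sum_univ_def, List.count_replicate]
  unfold entRow
  split_ifs with h
  · rw [Finset.sum_eq_single c, Finset.sum_eq_single ⟨x - 1, by omega⟩]
    · rw [if_pos]; simp; omega
    · intro b _ hb
      rw [if_neg]
      intro h'
      simp at h'
      apply hb
      ext; simp; omega
    · simp
    · intro b _ hb
      apply Finset.sum_eq_zero
      intro r _
      rw [if_neg]
      intro h'
      simp at h'
      exact hb h'.2
    · simp
  · apply Finset.sum_eq_zero
    intro b _
    apply Finset.sum_eq_zero
    intro r _
    rw [if_neg]
    intro h'
    simp at h'
    have := r.2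
    omega

theorem rowWordLbl_eq {m n : ℕ} (N : Matrix (Fin m) (Fin n) ℕ) (L : List (ℕ × Fin n))
    (hL : L.Pairwise LeL) (hc : ∀ x c, L.count (x, c) = entRow N x c) : rowWordLbl N = L := by
  apply List.Perm.eq_of_pairwise (le := LeL)
  · rintro ⟨a, c⟩ ⟨b, d⟩ _ _ h1 h2
    simp only [LeL] at h1 h2
    ext <;> simp <;> omega
  · exact rowWordLbl_pairwise N
  · exact hL
  · rw [List.perm_iff_count]
    rintro ⟨x, c⟩
    rw [hc, count_rowWordLbl]

/-- `N` is obtained from `M` by the lowering operator (on words). -/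
def FM {m n : ℕ} (i : ℕ) (M N : Matrix (Fin m) (Fin n) ℕ) : Prop :=
  ∃ A B c, rowWordLbl M = A ++ (i, c) :: B ∧ rowWordLbl N = A ++ (i + 1, c) :: B ∧
    (bk i (i + 1) (A.map Prod.fst)).2 = 0 ∧ (bk i (i + 1) (B.map Prod.fst)).1 = 0

theorem frow_some {m n : ℕ} {i : ℕ} (h1 : 1 ≤ i) (h2 : i ≤ m - 1) {M N : Matrix (Fin m) (Fin n) ℕ}
    (h : frow i M = some N) : FM i M N := by
  unfold frow at h
  rw [Option.map_eq_some_iff] at h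
  obtain ⟨c, hp, rfl⟩ := h
  obtain ⟨A, B, e, _, h3, h4⟩ := lastUnmatched_some _ _ _ _ _ hp
  refine ⟨A, B, c, e, ?_, h3, h4⟩
  have hpw := rowWordLbl_pairwise M
  rw [e, List.pairwise_append, List.pairwise_cons] at hpw
  obtain ⟨hA, ⟨hcB, hB⟩, hAB⟩ := hpw
  have hno : (i, c) ∉ B := by
    intro hm
    obtain ⟨B1, B2, rfl⟩ := List.append_of_mem hm
    have hno : i + 1 ∉ B1.map Prod.fst := by
      intro hi
      simp at hi
      obtain ⟨l, hi⟩ := hi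
      have l1 := hcB (i + 1, l) (by simp [hi])
      have l2 := (List.pairwise_append.1 hB).2.2 _ hi (i, c) (by simp)
      simp only [LeL] at l1 l2
      omega
    have := bk_no_op i _ hno
    simp [bk_append, bk_cons_cl, bmul] at h4
    omega
  apply rowWordLbl_eq
  · rw [List.pairwise_append, List.pairwise_cons]
    refine ⟨hA, ⟨?_, hB⟩, ?_⟩
    · rintro ⟨b, d⟩ hb
      have l1 := hcB _ hb
      have : ¬ ((b, d) = (i, c)) := by intro h; rw [h] at hb; exact hno hb
      simp only [LeL, Prod.mk.injEq] at l1 this ⊢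
      omega
    · rintro ⟨a, d⟩ ha ⟨b, d'⟩ hb
      simp only [List.mem_cons] at hb
      rcases hb with hb | hb
      · have l1 := hAB _ ha (i, c) (by simp)
        simp only [Prod.mk.injEq] at hb
        obtain ⟨rfl, rfl⟩ := hb
        simp only [LeL] at l1 ⊢
        omega
      · exact hAB _ ha (b, d') (by simp [hb])
  · intro x d
    have key := count_rowWordLbl M x d
    have key2 := count_rowWordLbl M i c
    rw [e] at key key2
    simp only [List.count_append, List.count_cons, beq_iff_eq, Prod.mk.injEq] at key key2 ⊢
    unfold entRow at key key2 ⊢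
    simp only [Matrix.of_apply]
    by_cases hd : d = c
    · subst hd
      simp only [and_true] at *
      have h5 : 1 ≤ i ∧ i ≤ m := by omega
      rw [dif_pos h5] at key2
      split_ifs at * <;> first | omega | (subst_vars; omega)
    · simp only [hd, Ne.symm hd, and_false, if_false, Nat.add_zero] at *
      exact key

theorem erow_some {m n : ℕ} {i : ℕ} (h1 : 1 ≤ i) (h2 : i ≤ m - 1) {M N : Matrix (Fin m) (Fin n) ℕ}
    (h : erow i M = some N) : FM i N M := by
  unfold erow at h
  rw [Option.map_eq_some_iff] at h
  obtain ⟨c, hp, rfl⟩ := h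
  obtain ⟨B', A', e', _, h4, h3⟩ := lastUnmatched_some _ _ _ _ _ hp
  obtain ⟨A, rfl⟩ : ∃ A : List _, A' = A.reverse := ⟨A'.reverse, by simp⟩
  obtain ⟨B, rfl⟩ : ∃ B : List _, B' = B.reverse := ⟨B'.reverse, by simp⟩
  have e : rowWordLbl M = A ++ (i + 1, c) :: B := by
    have := congrArg List.reverse e'
    simpa using this
  rw [List.map_reverse, bk_reverse _ _ (by omega)] at h3 h4
  simp only [Prod.fst_swap, Prod.snd_swap] at h3 h4
  refine ⟨A, B, c, ?_, e, h3, h4⟩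
  have hpw := rowWordLbl_pairwise M
  rw [e, List.pairwise_append, List.pairwise_cons] at hpw
  obtain ⟨hA, ⟨hcB, hB⟩, hAB⟩ := hpw
  have hno : (i + 1, c) ∉ A := by
    intro hm
    obtain ⟨A1, A2, rfl⟩ := List.append_of_mem hm
    have hno : i ∉ A2.map Prod.fst := by
      intro hi
      simp at hi
      obtain ⟨l, hi⟩ := hi
      have l1 := hAB (i, l) (by simp [hi]) (i + 1, c) (by simp)
      have l2 := (List.pairwise_cons.1 (List.pairwise_append.1 hA).2.1).1 (i, l) hi
      simp only [LeL] at l1 l2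
      omega
    have := bk_no_cl i _ hno
    simp [bk_append, bk_cons_op, bmul] at h3
    omega
  apply rowWordLbl_eq
  · rw [List.pairwise_append, List.pairwise_cons]
    refine ⟨hA, ⟨?_, hB⟩, ?_⟩
    · rintro ⟨b, d⟩ hb
      have l1 := hcB _ hb
      simp only [LeL] at l1 ⊢
      omega
    · rintro ⟨a, d⟩ ha ⟨b, d'⟩ hb
      simp only [List.mem_cons] at hb
      rcases hb with hb | hb
      · have l1 := hAB _ ha (i + 1, c) (by simp)
        have : ¬ ((a, d) = (i + 1, c)) := by intro h; rw [h] at ha; exact hno ha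
        simp only [Prod.mk.injEq] at hb this
        obtain ⟨rfl, rfl⟩ := hb
        simp only [LeL] at l1 ⊢
        omega
      · exact hAB _ ha (b, d') (by simp [hb])
  · intro x d
    have key := count_rowWordLbl M x d
    have key2 := count_rowWordLbl M (i + 1) c
    rw [e] at key key2
    simp only [List.count_append, List.count_cons, beq_iff_eq, Prod.mk.injEq] at key key2 ⊢
    unfold entRow at key key2 ⊢
    simp only [Matrix.of_apply]
    by_cases hd : d = c
    · subst hd
      simp only [and_true] at *
      have h5 : 1 ≤ i + 1 ∧ i + 1 ≤ m := by omega
      rw [dif_pos h5] at key2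
      split_ifs at * <;> first | omega | (subst_vars; omega)
    · simp only [hd, Ne.symm hd, and_false, if_false, Nat.add_zero] at *
      exact key

theorem frow_none {m n : ℕ} (i : ℕ) (M : Matrix (Fin m) (Fin n) ℕ) :
    frow i M = none ↔ (bk i (i + 1) (rowWord M)).1 = 0 := by
  unfold frow rowWord
  rw [Option.map_eq_none_iff, lastUnmatched_none, Nat.le_zero]

theorem erow_none {m n : ℕ} (i : ℕ) (M : Matrix (Fin m) (Fin n) ℕ) :
    erow i M = none ↔ (bk i (i + 1) (rowWord M)).2 = 0 := by
  unfold erow rowWord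
  rw [Option.map_eq_none_iff, lastUnmatched_none, List.map_reverse, bk_reverse _ _ (by omega),
    Nat.le_zero]
  rfl

theorem FM.fw {m n : ℕ} {i : ℕ} {M N : Matrix (Fin m) (Fin n) ℕ} (h : FM i M N) :
    FW i (rowWord M) (rowWord N) := by
  obtain ⟨A, B, c, h1, h2, h3, h4⟩ := h
  refine ⟨A.map Prod.fst, B.map Prod.fst, ?_, ?_, h3, h4⟩
  · unfold rowWord; rw [h1]; simp
  · unfold rowWord; rw [h2]; simp

end GCS

namespace GCS

theorem rins_local (pre : List ℕ) (x b : ℕ) (h : b < x) :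
    ∃ pre' y, ∀ t, rins (pre ++ x :: t) b = (pre' ++ t, y) := by
  induction pre with
  | nil => exact ⟨[b], [x], fun t => by simp [rins, h]⟩
  | cons z pre ih =>
    obtain ⟨p', y, ih⟩ := ih
    by_cases hz : b < z
    · exact ⟨b :: (pre ++ [x]), [z], fun t => by simp [rins, hz]⟩
    · exact ⟨z :: p', y, fun t => by simp [rins, hz, ih]⟩

theorem rinsW_local (b xs : List ℕ) (h : List.Forall₂ (· < ·) b xs) (pre : List ℕ) :
    ∃ row' x, ∀ s, rinsW (pre ++ xs ++ s) b = (row' ++ s, x) := by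
  induction h generalizing pre with
  | nil => exact ⟨pre, [], fun s => by simp [rinsW]⟩
  | @cons b0 x0 b xs h0 _ ih =>
    obtain ⟨pre', y, hy⟩ := rins_local pre x0 b0 h0
    obtain ⟨row', x, hx⟩ := ih pre'
    refine ⟨row', y ++ x, fun s => ?_⟩
    have e : pre ++ x0 :: xs ++ s = pre ++ x0 :: (xs ++ s) := by simp
    rw [rinsW, e, hy]
    simp only
    rw [← List.append_assoc, hx]

theorem rinsW_sorted_append (s w : List ℕ) (h : (s ++ w).Pairwise (· ≤ ·)) :
    rinsW s w = (s ++ w, []) := by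
  induction w generalizing s with
  | nil => simp [rinsW]
  | cons x w ih =>
    have h1 : ∀ y ∈ s, y ≤ x := by
      intro y hy
      exact (List.pairwise_append.1 h).2.2 y hy x (by simp)
    have h2 := rins_append_le s [] x h1
    simp only [List.append_nil, rins] at h2
    rw [rinsW, h2]
    simp only
    rw [ih (s ++ [x]) (by simpa using h)]
    simp

theorem rinsW_dom (bs a : List ℕ) (h : List.Forall₂ (· < ·) bs a) (s rest : List ℕ)
    (hs : (s ++ (bs ++ rest)).Pairwise (· ≤ ·)) :
    rinsW (s ++ a) (bs ++ rest) = (s ++ (bs ++ rest), a) := by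
  induction h generalizing s with
  | nil => simpa using rinsW_sorted_append s rest (by simpa using hs)
  | @cons b x bs a h0 _ ih =>
    have h1 : ∀ y ∈ s, y ≤ b := by
      intro y hy
      exact (List.pairwise_append.1 hs).2.2 y hy b (by simp)
    have h2 := rins_append_le s (x :: a) b h1
    rw [rins, if_pos h0] at h2
    simp only [] at h2
    rw [List.cons_append, rinsW, h2]
    have := ih (s ++ [b]) (by simpa using hs)
    simp only [List.append_assoc, List.cons_append, List.nil_append] at this
    rw [this]
    simp

theorem two_row (pre xs b1 a2 bs rest : List ℕ) (c : ℕ)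
    (h1 : List.Forall₂ (· < ·) b1 xs) (h2 : List.Forall₂ (· < ·) bs a2)
    (ha : (pre ++ xs ++ c :: a2).Pairwise (· ≤ ·))
    (hb : (c :: (bs ++ rest)).Pairwise (· ≤ ·)) :
    KnuthEquiv ((pre ++ xs ++ c :: a2) ++ (b1 ++ (bs ++ rest)))
      ((pre ++ xs ++ a2) ++ (b1 ++ c :: (bs ++ rest))) := by
  obtain ⟨row', x, hx⟩ := rinsW_local b1 xs h1 pre
  have k1 := rinsW_knuth b1 (pre ++ xs ++ c :: a2) ha
  have k2 := rinsW_knuth b1 (pre ++ xs ++ a2)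
    (ha.sublist ((List.Sublist.refl _).append (List.sublist_cons_self c a2)))
  rw [hx] at k1 k2
  simp only at k1 k2
  have k3 := rinsW_knuth (bs ++ rest) (c :: a2) (List.pairwise_append.1 ha).2.1
  have e3 := rinsW_dom bs a2 h2 [c] rest (by simpa using hb)
  simp only [List.cons_append, List.nil_append] at e3
  rw [e3] at k3
  simp only at k3
  have l1 := k1.right (bs ++ rest)
  have l2 := k2.right (c :: (bs ++ rest))
  have l3 := k3.left (x ++ row')
  simp only [List.append_assoc, List.cons_append] at l1 l2 l3 ⊢
  exact l1.tr (l3.tr l2.sym)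

/-- Labels of the letter `x`. -/
def lab {n : ℕ} (x : ℕ) (L : List (ℕ × Fin n)) : List ℕ :=
  L.filterMap fun a => if a.1 = x then some (a.2.1 + 1) else none

theorem lab_append {n : ℕ} (x : ℕ) (L L' : List (ℕ × Fin n)) :
    lab x (L ++ L') = lab x L ++ lab x L' := by simp [lab]

theorem lab_cons_eq {n : ℕ} (x : ℕ) (c : Fin n) (L : List (ℕ × Fin n)) :
    lab x ((x, c) :: L) = (c.1 + 1) :: lab x L := by simp [lab]

theorem lab_cons_ne {n : ℕ} {x y : ℕ} (h : y ≠ x) (c : Fin n) (L : List (ℕ × Fin n)) :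
    lab x ((y, c) :: L) = lab x L := by simp [lab, h]

theorem mem_lab {n : ℕ} {x z : ℕ} {L : List (ℕ × Fin n)} (h : z ∈ lab x L) :
    ∃ c : Fin n, (x, c) ∈ L ∧ z = c.1 + 1 := by
  simp only [lab, List.mem_filterMap] at h
  obtain ⟨⟨a, c⟩, hm, hz⟩ := h
  split_ifs at hz with h'
  · simp at hz h'
    subst h'
    exact ⟨c, hm, hz.symm⟩

theorem lab_sorted {n : ℕ} (x : ℕ) {L : List (ℕ × Fin n)} (h : L.Pairwise LeL) :
    (lab x L).Pairwise (· ≤ ·) := by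
  unfold lab
  rw [List.pairwise_filterMap]
  refine h.imp ?_
  rintro ⟨a, c⟩ ⟨b, d⟩ hab p hp q hq
  simp only [LeL] at hab
  split_ifs at hp hq
  simp at hp hq
  omega

theorem bk_len {n : ℕ} (i : ℕ) (L : List (ℕ × Fin n)) :
    (bk i (i + 1) (L.map Prod.fst)).1 + (lab (i + 1) L).length =
      (bk i (i + 1) (L.map Prod.fst)).2 + (lab i L).length := by
  induction L with
  | nil => simp [bk, lab]
  | cons a L ih =>
    obtain ⟨x, c⟩ := a
    by_cases h1 : x = i
    · subst h1
      rw [lab_cons_eq, lab_cons_ne (by omega), List.map_cons, bk_cons_cl]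
      simp only [List.length_cons]; omega
    · by_cases h2 : x = i + 1
      · subst h2
        rw [lab_cons_eq, lab_cons_ne (by omega), List.map_cons, bk_cons_op]
        simp only [List.length_cons]; omega
      · rw [lab_cons_ne h1, lab_cons_ne h2, List.map_cons, bk_cons_ne _ _ _ h1 h2]
        exact ih

theorem match_opens {n : ℕ} (i : ℕ) (L : List (ℕ × Fin n)) (hL : L.Pairwise LeL) (Y : List ℕ)
    (hY : ∀ y ∈ Y, ∀ z ∈ lab i L, y < z) (ho : (bk i (i + 1) (L.map Prod.fst)).2 = 0)
    (hc : Y.length ≤ (bk i (i + 1) (L.map Prod.fst)).1) :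
    ∃ pre xs, lab i L = pre ++ xs ∧ List.Forall₂ (· < ·) (Y ++ lab (i + 1) L) xs := by
  induction L generalizing Y with
  | nil =>
    simp [bk] at hc
    subst hc
    exact ⟨[], [], by simp [lab], by simp [lab]⟩
  | cons a L ih =>
    obtain ⟨x, c⟩ := a
    rw [List.pairwise_cons] at hL
    by_cases h1 : x = i
    · subst h1
      rw [lab_cons_eq] at hY ⊢
      rw [lab_cons_ne (by omega)]
      rw [List.map_cons, bk_cons_cl] at ho hc
      simp only at ho hc
      by_cases hlen : Y.length ≤ (bk x (x + 1) (L.map Prod.fst)).1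
      · obtain ⟨pre, xs, e, hF⟩ := ih hL.2 Y (fun y hy z hz => hY y hy z (by simp [hz])) ho hlen
        exact ⟨(c.1 + 1) :: pre, xs, by simp [e], hF⟩
      · cases Y with
        | nil => simp at hlen
        | cons y Y =>
          simp only [List.length_cons] at hlen hc
          obtain ⟨pre, xs, e, hF⟩ := ih hL.2 Y
            (fun y hy z hz => hY y (by simp [hy]) z (by simp [hz])) ho (by omega)
          have hl := hF.length_eq
          have hl2 := congrArg List.length e
          have hl3 := bk_len x L
          simp only [List.length_append] at hl hl2
          have : pre = [] := List.length_eq_zero_iff.1 (by omega)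
          subst this
          refine ⟨[], (c.1 + 1) :: xs, by simpa using e, ?_⟩
          exact List.Forall₂.cons (hY y (by simp) _ (by simp)) hF
    · by_cases h2 : x = i + 1
      · subst h2
        rw [lab_cons_ne (by omega)] at hY ⊢
        rw [lab_cons_eq]
        rw [List.map_cons, bk_cons_op] at ho hc
        simp only at ho hc
        obtain ⟨pre, xs, e, hF⟩ := ih hL.2 (Y ++ [c.1 + 1]) (by
          intro y hy z hz
          simp only [List.mem_append, List.mem_singleton] at hy
          rcases hy with hy | rfl
          · exact hY y hy z hz
          · obtain ⟨d, hd, rfl⟩ := mem_lab hz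
            have := hL.1 _ hd
            simp only [LeL] at this
            omega) (by omega) (by simp; omega)
        exact ⟨pre, xs, e, by simpa using hF⟩
      · rw [lab_cons_ne h1] at hY ⊢
        rw [lab_cons_ne h2]
        rw [List.map_cons, bk_cons_ne _ _ _ h1 h2] at ho hc
        exact ih hL.2 Y hY ho hc

theorem match_closes {n : ℕ} (i : ℕ) (L : List (ℕ × Fin n)) (hL : L.Pairwise LeL) (Y : List ℕ)
    (hY : ∀ y ∈ Y, ∀ z ∈ lab i L, y < z)
    (hc : (bk i (i + 1) (L.map Prod.fst)).1 ≤ Y.length) :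
    ∃ bs rest, Y ++ lab (i + 1) L = bs ++ rest ∧ List.Forall₂ (· < ·) bs (lab i L) := by
  induction L generalizing Y with
  | nil => exact ⟨[], Y, by simp [lab], by simp [lab]⟩
  | cons a L ih =>
    obtain ⟨x, c⟩ := a
    rw [List.pairwise_cons] at hL
    by_cases h1 : x = i
    · subst h1
      rw [lab_cons_eq] at hY ⊢
      rw [lab_cons_ne (by omega)]
      rw [List.map_cons, bk_cons_cl] at hc
      simp only at hc
      cases Y with
      | nil => simp at hc
      | cons y Y =>
        simp only [List.length_cons] at hc
        obtain ⟨bs, rest, e, hF⟩ := ih hL.2 Y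
          (fun y hy z hz => hY y (by simp [hy]) z (by simp [hz])) (by omega)
        exact ⟨y :: bs, rest, by simp [e], List.Forall₂.cons (hY y (by simp) _ (by simp)) hF⟩
    · by_cases h2 : x = i + 1
      · subst h2
        rw [lab_cons_ne (by omega : i + 1 ≠ i)] at hY ⊢
        rw [lab_cons_eq]
        rw [List.map_cons, bk_cons_op] at hc
        simp only at hc
        obtain ⟨bs, rest, e, hF⟩ := ih hL.2 (Y ++ [c.1 + 1]) (by
          intro y hy z hz
          simp only [List.mem_append, List.mem_singleton] at hy
          rcases hy with hy | rfl
          · exact hY y hy z hz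
          · obtain ⟨d, hd, rfl⟩ := mem_lab hz
            have := hL.1 _ hd
            simp only [LeL] at this
            omega) (by simp; omega)
        exact ⟨bs, rest, by simpa using e, hF⟩
      · rw [lab_cons_ne h1] at hY ⊢
        rw [lab_cons_ne h2]
        rw [List.map_cons, bk_cons_ne _ _ _ h1 h2] at hc
        exact ih hL.2 Y hY hc

theorem flatMap_single {α β : Type} [DecidableEq α] (l : List α) (hl : l.Nodup) (r : α) (hr : r ∈ l)
    (X : α → List β) : (l.flatMap fun r' => if r' = r then X r' else []) = X r := by
  induction l with
  | nil => simp at hr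
  | cons a l ih =>
    rw [List.nodup_cons] at hl
    rw [List.flatMap_cons]
    by_cases h : a = r
    · subst h
      have : (l.flatMap fun r' => if r' = a then X r' else []) = [] := by
        rw [List.flatMap_eq_nil_iff]
        intro b hb
        rw [if_neg]
        rintro rfl
        exact hl.1 hb
      simp [this]
    · rw [if_neg h, List.nil_append]
      refine ih hl.2 ?_
      rcases List.mem_cons.1 hr with h' | h'
      · exact absurd h'.symm h
      · exact h'

theorem lab_rowWordLbl {m n : ℕ} (M : Matrix (Fin m) (Fin n) ℕ) (r : Fin m) :
    lab (r.1 + 1) (rowWordLbl M) =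
      (List.finRange n).flatMap fun c => List.replicate (M r c) (c.1 + 1) := by
  unfold lab rowWordLbl
  rw [List.filterMap_flatMap]
  congr 1
  funext c
  rw [List.filterMap_flatMap]
  rw [← flatMap_single (List.finRange m) (List.nodup_finRange m) r (List.mem_finRange r)
    (fun r' => List.replicate (M r' c) (c.1 + 1))]
  congr 1
  funext r'
  by_cases h : r' = r
  · subst h
    rw [if_pos rfl]
    simp
  · rw [if_neg h, List.filterMap_eq_nil_iff]
    intro a ha
    rw [List.mem_replicate] at ha
    rw [ha.2, if_neg]
    simp only
    intro h'
    apply h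
    ext; omega

theorem colWord_eq {m n : ℕ} (M : Matrix (Fin m) (Fin n) ℕ) :
    colWord M = (List.range m).flatMap fun r => lab (r + 1) (rowWordLbl M) := by
  rw [← List.map_coe_finRange_eq_range, List.flatMap_map]
  unfold colWord rowWord
  conv_lhs => unfold rowWordLbl
  rw [List.map_flatMap]
  congr 1
  funext r
  rw [lab_rowWordLbl, List.map_flatMap]
  congr 1
  funext c
  simp [Matrix.transpose_apply]

theorem FM.colKn {m n : ℕ} {i : ℕ} (hi : 1 ≤ i) (him : i ≤ m - 1)
    {M N : Matrix (Fin m) (Fin n) ℕ} (h : FM i M N) :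
    KnuthEquiv (colWord M) (colWord N) := by
  have hpM := rowWordLbl_pairwise M
  have hpN := rowWordLbl_pairwise N
  rw [colWord_eq, colWord_eq]
  obtain ⟨A, B, c, h1, h2, h3, h4⟩ := h
  rw [h1] at hpM
  rw [h2] at hpN
  rw [h1, h2]
  obtain ⟨k, rfl⟩ : ∃ k, i = k + 1 := ⟨i - 1, by omega⟩
  obtain ⟨l, rfl⟩ : ∃ l, m = k + 2 + l := ⟨m - (k + 2), by omega⟩
  rw [List.range_add, List.range_succ, List.range_succ]
  simp only [List.flatMap_append, List.flatMap_cons, List.flatMap_nil, List.append_nil]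
  have e1 : ∀ x, x ≠ k + 1 → x ≠ k + 2 →
      lab x (A ++ (k + 1, c) :: B) = lab x (A ++ (k + 1 + 1, c) :: B) := by
    intro x hx hx'
    rw [lab_append, lab_append, lab_cons_ne (Ne.symm hx), lab_cons_ne (Ne.symm hx')]
  have e2 : ((List.range k).flatMap fun r => lab (r + 1) (A ++ (k + 1, c) :: B)) =
      ((List.range k).flatMap fun r => lab (r + 1) (A ++ (k + 1 + 1, c) :: B)) := by
    apply List.flatMap_congr
    intro r hr
    rw [List.mem_range] at hr
    exact e1 _ (by omega) (by omega)
  have e3 : ((List.map (fun x => k + 2 + x) (List.range l)).flatMap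
      fun r => lab (r + 1) (A ++ (k + 1, c) :: B)) =
      ((List.map (fun x => k + 2 + x) (List.range l)).flatMap
      fun r => lab (r + 1) (A ++ (k + 1 + 1, c) :: B)) := by
    apply List.flatMap_congr
    intro r hr
    simp only [List.mem_map, List.mem_range] at hr
    obtain ⟨a, _, rfl⟩ := hr
    exact e1 _ (by omega) (by omega)
  rw [e2, e3]
  have hsA := (List.pairwise_append.1 hpM).1
  have hsB := (List.pairwise_cons.1 (List.pairwise_append.1 hpM).2.1).2
  obtain ⟨pre, xs, f1, f2⟩ := match_opens (k + 1) A hsA [] (by simp) h3 (by simp)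
  obtain ⟨bs, rest, f3, f4⟩ := match_closes (k + 1) B hsB [] (by simp) (by omega)
  rw [List.nil_append] at f2 f3
  have sa := lab_sorted (k + 1) hpM
  have sb := (List.pairwise_append.1 hpN).2.1
  have sb := lab_sorted (k + 1 + 1) sb
  rw [lab_append, lab_cons_eq, f1] at sa
  rw [lab_cons_eq, f3] at sb
  have key := two_row pre xs _ _ bs rest _ f2 f4 sa sb
  rw [← f1, ← f3] at key
  have key2 := key.ctx ((List.range k).flatMap fun r => lab (r + 1) (A ++ (k + 1 + 1, c) :: B))
    ((List.map (fun x => k + 2 + x) (List.range l)).flatMap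
      fun r => lab (r + 1) (A ++ (k + 1 + 1, c) :: B))
  simp only [lab_append, lab_cons_eq, lab_cons_ne (by omega : k + 1 + 1 ≠ k + 1),
    lab_cons_ne (by omega : k + 1 ≠ k + 1 + 1), List.append_assoc, List.cons_append] at key2 ⊢
  exact key2

theorem FM.core {m n : ℕ} {i : ℕ} (hi : 1 ≤ i) (him : i ≤ m - 1)
    {M N : Matrix (Fin m) (Fin n) ℕ} (h : FM i M N) :
    FT i (tab (rowWord M)) (tab (rowWord N)) ∧
    fTab i (tab (rowWord M)) = some (tab (rowWord N)) ∧ tab (colWord N) = tab (colWord M) := by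
  have hK := knuth_tabWord_tab (rowWord M)
  have hS := tab_SS (rowWord M)
  suffices H : fTab i (tab (rowWord M)) = some (tab (rowWord N)) from
    ⟨fTab_some H, H, (h.colKn hi him).tab_eq.symm⟩
  cases hf : fTab i (tab (rowWord M)) with
  | none =>
    exfalso
    rw [fTab_none, ← bk_knuth hK] at hf
    obtain ⟨A, B, e, _, h3, h4⟩ := h.fw
    rw [e, bk_append, bk_cons_cl] at hf
    simp only [bmul] at hf
    omega
  | some S =>
    have hFT := fTab_some hf
    have hk := FW_knuth_eq hK h.fw (hFT.fw hS)
    rw [hk.tab_eq, tab_tabWord (hFT.ss hS)]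

theorem row_part {m n : ℕ} (M : Matrix (Fin m) (Fin n) ℕ) (i : ℕ) (hi : 1 ≤ i) (him : i ≤ m - 1) :
    Option.map RSKmap (frow i M) =
      Option.map (fun P' => (P', tab (colWord M))) (fTab i (tab (rowWord M))) ∧
    Option.map RSKmap (erow i M) =
      Option.map (fun P' => (P', tab (colWord M))) (eTab i (tab (rowWord M))) := by
  have hK := knuth_tabWord_tab (rowWord M)
  constructor
  · cases hf : frow i M with
    | none =>
      rw [frow_none, bk_knuth hK, ← fTab_none] at hf
      rw [hf]; rfl
    | some N =>
      obtain ⟨_, h2, h3⟩ := (frow_some hi him hf).core hi him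
      rw [h2]
      simp [RSKmap, h3]
  · cases hf : erow i M with
    | none =>
      rw [erow_none, bk_knuth hK, ← eTab_none] at hf
      rw [hf]; rfl
    | some N =>
      obtain ⟨h1, h2, h3⟩ := (erow_some hi him hf).core hi him
      rw [h1.eTab (tab_SS _)]
      simp [RSKmap, h3]

theorem RSKmap_transpose {m n : ℕ} (M : Matrix (Fin m) (Fin n) ℕ) :
    RSKmap M.transpose = (RSKmap M).swap := by
  simp [RSKmap, colWord]

theorem col_part {m n : ℕ} (M : Matrix (Fin m) (Fin n) ℕ) (j : ℕ) (hj : 1 ≤ j) (hjn : j ≤ n - 1) :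
    Option.map RSKmap (fcol j M) =
      Option.map (fun Q' => (tab (rowWord M), Q')) (fTab j (tab (colWord M))) ∧
    Option.map RSKmap (ecol j M) =
      Option.map (fun Q' => (tab (rowWord M), Q')) (eTab j (tab (colWord M))) := by
  obtain ⟨h1, h2⟩ := row_part M.transpose j hj hjn
  have e1 : colWord M.transpose = rowWord M := by simp [colWord]
  have e2 : rowWord M.transpose = colWord M := rfl
  rw [e1, e2] at h1 h2
  have key : ∀ o : Option (Matrix (Fin n) (Fin m) ℕ),
      Option.map RSKmap (Option.map Matrix.transpose o) =
        Option.map Prod.swap (Option.map RSKmap o) := by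
    intro o
    cases o with
    | none => rfl
    | some N => simp [RSKmap_transpose]
  unfold fcol ecol
  rw [key, key, h1, h2]
  constructor <;> simp [Function.comp_def]

end GCS

open GCS in
/-- Proposition `pullback`: the bicrystal operators on matrices are the
pullbacks of the tableau crystal operators along `RSK`.  With `RSK(M) = (P, Q)`:
`RSK(f_i^row M) = (f_i P, Q)`, `RSK(e_i^row M) = (e_i P, Q)`, `RSK(f_j^col M) = (P, f_j Q)`
and `RSK(e_j^col M) = (P, e_j Q)`, where the matrix operator returns `∅` exactly when the
tableau operator does. -/
theorem rsk_pullback_of_bicrystal_ops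
    (m n : ℕ) (M : Matrix (Fin m) (Fin n) ℕ) (P Q : List (List ℕ))
    (hP : P = tab (rowWord M)) (hQ : Q = tab (colWord M)) :
    (∀ i, 1 ≤ i → i ≤ m - 1 →
      Option.map RSKmap (frow i M) = Option.map (fun P' => (P', Q)) (fTab i P) ∧
      Option.map RSKmap (erow i M) = Option.map (fun P' => (P', Q)) (eTab i P)) ∧
    (∀ j, 1 ≤ j → j ≤ n - 1 →
      Option.map RSKmap (fcol j M) = Option.map (fun Q' => (P, Q')) (fTab j Q) ∧
      Option.map RSKmap (ecol j M) = Option.map (fun Q' => (P, Q')) (eTab j Q)) := by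
  subst hP hQ
  exact ⟨fun i hi him => row_part M i hi him, fun j hj hjn => col_part M j hj hjn⟩
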